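/- Let D be a face-convex good drawing of K_n with outer face F, let uv be an edge of K_n, let W ⊆ V(K_n), and let {i,j} = {1,2}. If |(W ∪ {u,v}) ∩ Side(uv,j)| ≥ 3, then no vertex of Side(uv,i) ∖ {u,v} has its point in the convex hull Δ_{(W∪{u,v}) ∩ Side(uv,j)}. -/

import Mathlib

open Set Topology

noncomputable section

abbrev Plane : Type := EuclideanSpace ℝ (Fin 2)

abbrev SpherePt : Type := ↥(Metric.sphere (0 : EuclideanSpace ℝ (Fin 3)) 1)

/-- `γ` crosses the curve `σ` at `p`: `p` lies on both sets, and in every neighbourhood of `p`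
there is a smaller neighbourhood `V` such that `V \ σ` splits into two connected "sides",
both of which meet `γ`. -/
def CrossesAt {X : Type*} [TopologicalSpace X] (σ γ : Set X) (p : X) : Prop :=
  p ∈ σ ∧ p ∈ γ ∧ ∀ U ∈ nhds p, ∃ V ∈ nhds p, V ⊆ U ∧
    ∃ C₁ C₂ : Set X, V \ σ = C₁ ∪ C₂ ∧ Disjoint C₁ C₂ ∧
      IsPreconnected C₁ ∧ IsPreconnected C₂ ∧ (γ ∩ C₁).Nonempty ∧ (γ ∩ C₂).Nonempty

/-- `Δ` is one of the closed regions ("closed discs") bounded by the curve `C`: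
it is the union of `C` with a connected component of the complement of `C`. -/
def IsClosedSide {X : Type*} [TopologicalSpace X] (C Δ : Set X) : Prop :=
  ∃ q, q ∉ C ∧ Δ = connectedComponentIn Cᶜ q ∪ C

/-- `Δ` is one of the open regions ("open discs") bounded by the curve `C`. -/
def IsOpenSide {X : Type*} [TopologicalSpace X] (C Δ : Set X) : Prop :=
  ∃ q, q ∉ C ∧ Δ = connectedComponentIn Cᶜ q

/-- `G` is a face (a connected component of the complement) of the point set `A`. -/
def IsFaceOf {X : Type*} [TopologicalSpace X] (A G : Set X) : Prop :=
  ∃ q, q ∉ A ∧ G = connectedComponentIn Aᶜ q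

/-- A good drawing of the complete graph `K_n` in the space `X`. -/
structure GoodDrawing (n : ℕ) (X : Type*) [TopologicalSpace X] where
  vtx : Fin n → X
  arc : Fin n → Fin n → Set X
  vtx_inj : Function.Injective vtx
  arc_symm : ∀ u v, arc u v = arc v u
  isArc : ∀ u v, u ≠ v → ∃ f : ℝ → X, ContinuousOn f (Set.Icc 0 1) ∧
    Set.InjOn f (Set.Icc 0 1) ∧ f 0 = vtx u ∧ f 1 = vtx v ∧ arc u v = f '' Set.Icc 0 1
  vtx_not_mem : ∀ u v w, u ≠ v → w ≠ u → w ≠ v → vtx w ∉ arc u v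
  adj_arcs : ∀ u v w, u ≠ v → u ≠ w → v ≠ w → arc u v ∩ arc u w = {vtx u}
  indep_arcs : ∀ u v x y : Fin n, u ≠ v → x ≠ y → u ≠ x → u ≠ y → v ≠ x → v ≠ y →
    (arc u v ∩ arc x y).Subsingleton ∧
      ∀ p ∈ arc u v ∩ arc x y,
        CrossesAt (arc u v) (arc x y) p ∧ CrossesAt (arc x y) (arc u v) p
  no_triple_pt : ∀ p : X, p ∉ Set.range vtx → ∀ u v x y s t : Fin n,
    u ≠ v → x ≠ y → s ≠ t →
    ({u, v} : Finset (Fin n)) ≠ {x, y} → ({u, v} : Finset (Fin n)) ≠ {s, t} →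
    ({x, y} : Finset (Fin n)) ≠ {s, t} →
    ¬(p ∈ arc u v ∧ p ∈ arc x y ∧ p ∈ arc s t)

namespace GoodDrawing

variable {n : ℕ} {X : Type*} [TopologicalSpace X]

/-- The point set of the subdrawing induced by the set `W` of vertices. -/
def image (D : GoodDrawing n X) (W : Set (Fin n)) : Set X :=
  (D.vtx '' W) ∪ ⋃ u ∈ W, ⋃ v ∈ W, ⋃ (_ : u ≠ v), D.arc u v

/-- The simple closed curve that is the drawing of the 3-cycle on `a`, `b`, `c`. -/
def tri (D : GoodDrawing n X) (a b c : Fin n) : Set X :=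
  D.arc a b ∪ D.arc b c ∪ D.arc a c

/-- `Δ` is convex: it contains the arc between any two vertex points it contains. -/
def ConvexDisc (D : GoodDrawing n X) (Δ : Set X) : Prop :=
  ∀ x y : Fin n, x ≠ y → D.vtx x ∈ Δ → D.vtx y ∈ Δ → D.arc x y ⊆ Δ

/-- `F` is a face of the drawing `D`. -/
def IsFace (D : GoodDrawing n X) (F : Set X) : Prop :=
  IsFaceOf (D.image Set.univ) F

/-- `D` is face-convex with outer face `F`. -/
def FaceConvex (D : GoodDrawing n X) (F : Set X) : Prop :=
  D.IsFace F ∧ ∀ a b c : Fin n, a ≠ b → a ≠ c → b ≠ c →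
    ∀ Δ : Set X, IsClosedSide (D.tri a b c) Δ → ¬F ⊆ Δ → D.ConvexDisc Δ

/-- `D` is a convex drawing: every 3-cycle has at least one convex closed side. -/
def IsConvex (D : GoodDrawing n X) : Prop :=
  ∀ a b c : Fin n, a ≠ b → a ≠ c → b ≠ c →
    ∃ Δ : Set X, IsClosedSide (D.tri a b c) Δ ∧ D.ConvexDisc Δ

/-- The closed curve drawn by the cycle `c 0, c 1, …, c (m-1), c 0` of `K_n`. -/
def cycCurve (D : GoodDrawing n X) {m : ℕ} [NeZero m] (c : Fin m → Fin n) : Set X :=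
  ⋃ i : Fin m, D.arc (c i) (c (i + 1))

/-- `Δ` is the convex hull `Δ_W` of the vertex set `W` (relative to the outer face `F`):
the face of the subdrawing `D[W]` containing `F` is bounded by a cycle `C_W` on vertices
of `W`, and `Δ` is the closed disc bounded by `D[C_W]` disjoint from `F`. -/
def IsHull (D : GoodDrawing n X) (F : Set X) (W : Set (Fin n)) (Δ : Set X) : Prop :=
  ∃ (m : ℕ) (c : Fin (m + 3) → Fin n), Function.Injective c ∧ (∀ i, c i ∈ W) ∧
    (∃ G : Set X, IsFaceOf (D.image W) G ∧ F ⊆ G ∧ frontier G = D.cycCurve c) ∧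
    IsClosedSide (D.cycCurve c) Δ ∧ Disjoint F Δ

/-- The data of the two local sides `C 0`, `C 1` of the arc `D[uv]` at an interior
point `p` of the arc. -/
def LocalSides (D : GoodDrawing n X) (u v : Fin n) (p : X) (C : Fin 2 → Set X) : Prop :=
  p ∈ D.arc u v ∧ p ≠ D.vtx u ∧ p ≠ D.vtx v ∧
    ∃ V ∈ nhds p, C 0 ∪ C 1 = V \ D.arc u v ∧ Disjoint (C 0) (C 1) ∧
      IsPreconnected (C 0) ∧ IsPreconnected (C 1) ∧ (C 0).Nonempty ∧ (C 1).Nonempty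

/-- Relative to the outer face `F` and the local sides `C` of `D[uv]` at `p`, the
vertex `w` is on side `i` of `uv`: the closed disc bounded by `D[{u,v,w}]` not
containing `F` lies locally on side `i` of `D[uv]`. -/
def OnSide (D : GoodDrawing n X) (F : Set X) (u v : Fin n) (p : X) (C : Fin 2 → Set X)
    (i : Fin 2) (w : Fin n) : Prop :=
  w ≠ u ∧ w ≠ v ∧ ∃ Δ : Set X, IsClosedSide (D.tri u v w) Δ ∧ ¬F ⊆ Δ ∧
    ∃ V ∈ nhds p, C i ∩ V ⊆ Δ

/-- `Side(uv, i)`: the set consisting of `u`, `v` and all vertices on side `i` of `uv`. -/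
def SideSet (D : GoodDrawing n X) (F : Set X) (u v : Fin n) (p : X) (C : Fin 2 → Set X)
    (i : Fin 2) : Set (Fin n) :=
  {u, v} ∪ {w : Fin n | D.OnSide F u v p C i w}

/-- The edge-arcs `D[uv]` and `D[xy]` cross: they share a non-vertex point. -/
def Crosses (D : GoodDrawing n X) (u v x y : Fin n) : Prop :=
  ∃ p : X, p ∈ D.arc u v ∩ D.arc x y ∧ p ∉ Set.range D.vtx

/-- The set of empty triangles of `D`: pairs of a 3-set of vertices together with an
open disc bounded by the corresponding triangle containing no vertex point. -/
def emptyTriangles (D : GoodDrawing n X) : Set (Finset (Fin n) × Set X) :=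
  {T | ∃ a b c : Fin n, a ≠ b ∧ a ≠ c ∧ b ≠ c ∧ T.1 = {a, b, c} ∧
    IsOpenSide (D.tri a b c) T.2 ∧ ∀ i, D.vtx i ∉ T.2}

end GoodDrawing

/-- A pseudoline in the plane. -/
def IsPseudoline (σ : Set Plane) : Prop :=
  IsClosed σ ∧ Nonempty (↥σ ≃ₜ ℝ) ∧ ¬IsPreconnected σᶜ

/-- An arrangement of pseudolines: any two distinct members meet in exactly one
point, at which they cross. -/
def IsArrangement (A : Finset (Set Plane)) : Prop :=
  (∀ σ ∈ A, IsPseudoline σ) ∧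
    ∀ σ ∈ A, ∀ τ ∈ A, σ ≠ τ →
      ∃ p : Plane, σ ∩ τ = {p} ∧ CrossesAt σ τ p ∧ CrossesAt τ σ p

/-- A planar good drawing of `K_n` is pseudolinear if some arrangement of pseudolines
contains, for each edge, a distinct pseudoline containing that edge-arc. -/
def GoodDrawing.Pseudolinear {n : ℕ} (D : GoodDrawing n Plane) : Prop :=
  ∃ (A : Finset (Set Plane)) (L : Fin n → Fin n → Set Plane), IsArrangement A ∧
    (∀ u v, u ≠ v → L u v ∈ A ∧ D.arc u v ⊆ L u v) ∧
    (∀ u v, L u v = L v u) ∧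
    ∀ u v x y : Fin n, u ≠ v → x ≠ y →
      ({u, v} : Finset (Fin n)) ≠ {x, y} → L u v ≠ L x y

namespace HullAux

/-- `L` is a continuous logarithm of `f` on `K`. -/
def IsLog {X : Type*} [TopologicalSpace X] (f : X → ℂ) (K : Set X) (L : X → ℂ) : Prop :=
  ContinuousOn L K ∧ ∀ z ∈ K, Complex.exp (L z) = f z

section general
variable {X : Type*} [TopologicalSpace X]

theorem IsLog.mono {f : X → ℂ} {K K' : Set X} {L : X → ℂ} (h : IsLog f K L) (hK : K' ⊆ K) :
    IsLog f K' L := ⟨h.1.mono hK, fun z hz => h.2 z (hK hz)⟩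

theorem const_of_exp_one {K : Set X} (hK : IsPreconnected K) {g : X → ℂ} (hg : ContinuousOn g K)
    (h1 : ∀ z ∈ K, Complex.exp (g z) = 1) {x y : X} (hx : x ∈ K) (hy : y ∈ K) : g x = g y := by
  have hr : IsDiscrete (range fun n : ℤ => (n : ℝ)) := by
    have := Int.isClosedEmbedding_coe_real.isEmbedding
    rw [isDiscrete_iff_discreteTopology]
    exact this.toHomeomorph.symm.isEmbedding.discreteTopology
  have key : (g x).im / (2 * Real.pi) = (g y).im / (2 * Real.pi) := by
    refine hK.constant_of_mapsTo hr (f := fun z => (g z).im / (2 * Real.pi)) ?_ ?_ hx hy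
    · exact (Complex.continuous_im.comp_continuousOn hg).div_const _
    · intro z hz
      obtain ⟨n, hn⟩ := Complex.exp_eq_one_iff.1 (h1 z hz)
      refine ⟨n, ?_⟩
      have hp := Real.pi_pos
      simp only [hn]
      simp
  have hre : ∀ z ∈ K, (g z).re = 0 := by
    intro z hz
    obtain ⟨n, hn⟩ := Complex.exp_eq_one_iff.1 (h1 z hz)
    rw [hn]; simp
  apply Complex.ext
  · rw [hre x hx, hre y hy]
  · have hp := Real.pi_pos
    field_simp at key
    exact key

theorem IsLog.var_eq {f : X → ℂ} {K : Set X} {L L' : X → ℂ} (hK : IsPreconnected K)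
    (h : IsLog f K L) (h' : IsLog f K L') {x y : X} (hx : x ∈ K) (hy : y ∈ K) :
    L y - L x = L' y - L' x := by
  have := const_of_exp_one hK (h.1.sub h'.1) (fun z hz => by
    rw [Pi.sub_apply, Complex.exp_sub, h.2 z hz, h'.2 z hz, div_self]
    rw [← h.2 z hz]; exact Complex.exp_ne_zero _) hx hy
  simp only [Pi.sub_apply] at this
  linear_combination -this

/-- Continuous nonvanishing functions on the plane have logarithms. -/
theorem exists_log_plane {h : ℂ → ℂ} (hc : Continuous h) (h0 : ∀ z, h z ≠ 0) :
    ∃ L : ℂ → ℂ, Continuous L ∧ ∀ z, Complex.exp (L z) = h z := by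
  obtain ⟨F, ⟨-, hF⟩, -⟩ := Complex.isCoveringMapOn_exp.existsUnique_continuousMap_lifts
    (⟨h, hc⟩ : C(ℂ, ℂ)) (a₀ := 0) (e₀ := Complex.log (h 0)) (by simp [Complex.exp_log (h0 0)])
    (fun z => h0 z)
  exact ⟨F, F.continuous, fun z => congrFun hF z⟩

theorem exists_log_real {h : ℝ → ℂ} (hc : Continuous h) (h0 : ∀ z, h z ≠ 0) :
    ∃ L : ℝ → ℂ, Continuous L ∧ ∀ z, Complex.exp (L z) = h z := by
  obtain ⟨F, ⟨-, hF⟩, -⟩ := Complex.isCoveringMapOn_exp.existsUnique_continuousMap_lifts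
    (⟨h, hc⟩ : C(ℝ, ℂ)) (a₀ := 0) (e₀ := Complex.log (h 0)) (by simp [Complex.exp_log (h0 0)])
    (fun z => h0 z)
  exact ⟨F, F.continuous, fun z => congrFun hF z⟩

/-- A power function around a point has no logarithm on a circle. -/
theorem no_log_circle {c : ℂ} {R : ℝ} (hR : 0 < R) {n : ℤ} {L : ℂ → ℂ}
    (hL : IsLog (fun z => (z - c) ^ n) (Metric.sphere c R) L) : n = 0 := by
  let γ : ℝ → ℂ := fun t => c + R * Complex.exp (t * Complex.I)
  have hγ : ∀ t, γ t ∈ Metric.sphere c R := by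
    intro t
    simp [γ, Complex.norm_exp_ofReal_mul_I, abs_of_pos hR]
  have hγc : Continuous γ := by fun_prop
  have hg : Continuous fun t : ℝ => L (γ t) - n * (t * Complex.I) - n * (Real.log R : ℝ) := by
    have : Continuous fun t => L (γ t) := hL.1.comp_continuous hγc hγ
    exact (this.sub (continuous_const.mul (Complex.continuous_ofReal.mul continuous_const))).sub
      continuous_const
  have := const_of_exp_one (K := (univ : Set ℝ)) isPreconnected_univ hg.continuousOn (by
    intro t _
    rw [Complex.exp_sub, Complex.exp_sub, hL.2 _ (hγ t), Complex.exp_int_mul, Complex.exp_int_mul,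
      ← Complex.ofReal_exp, Real.exp_log hR]
    have h1 : (R : ℂ) ≠ 0 := by exact_mod_cast hR.ne'
    have h2 := Complex.exp_ne_zero (t * Complex.I)
    simp only [γ, add_sub_cancel_left, mul_zpow]
    field_simp) (mem_univ (0 : ℝ)) (mem_univ (2 * Real.pi))
  have h3 : γ (2 * Real.pi) = γ 0 := by
    simp [γ, Complex.exp_two_pi_mul_I]
  rw [h3] at this
  have h4 : (n : ℂ) * (2 * Real.pi * Complex.I) = 0 := by
    push_cast at this
    linear_combination this
  have := Real.pi_ne_zero
  simpa [this] using h4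

/-- Logarithms exist on arcs. -/
theorem exists_log_arc [T2Space X] {A : Set X} {γ : ℝ → X} (hγ : ContinuousOn γ (Icc 0 1))
    (hi : InjOn γ (Icc 0 1)) (hA : A = γ '' Icc 0 1) {f : X → ℂ} (hf : ContinuousOn f A)
    (h0 : ∀ z ∈ A, f z ≠ 0) : ∃ L, IsLog f A L := by
  subst hA
  let π : ℝ → ℝ := fun t => projIcc (0 : ℝ) 1 zero_le_one t
  have hπ : Continuous π := continuous_subtype_val.comp continuous_projIcc
  have hπm : ∀ t, π t ∈ Icc (0 : ℝ) 1 := fun t => (projIcc (0 : ℝ) 1 zero_le_one t).2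
  have hπi : ∀ t ∈ Icc (0 : ℝ) 1, π t = t := fun t ht => by simp [π, projIcc_of_mem _ ht]
  have h1 : Continuous fun t => f (γ (π t)) :=
    hf.comp_continuous (hγ.comp_continuous hπ hπm) fun t => mem_image_of_mem _ (hπm t)
  obtain ⟨l, hl, hle⟩ := exists_log_real h1 fun t => h0 _ (mem_image_of_mem _ (hπm t))
  -- inverse of γ
  let g : Icc (0 : ℝ) 1 → X := fun t => γ t
  have hg : IsClosedEmbedding g :=
    (continuousOn_iff_continuous_domRestrict.1 hγ).isClosedEmbedding (injOn_iff_injective.1 hi)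
  let ρ : X → ℝ := Function.invFunOn γ (Icc 0 1)
  have hρ : ∀ z ∈ γ '' Icc 0 1, ρ z ∈ Icc (0 : ℝ) 1 ∧ γ (ρ z) = z := fun z hz =>
    ⟨Function.invFunOn_mem hz, Function.invFunOn_eq hz⟩
  have hρc : ContinuousOn ρ (γ '' Icc 0 1) := by
    rw [continuousOn_iff_isClosed]
    intro t ht
    refine ⟨γ '' (t ∩ Icc 0 1), ?_, ?_⟩
    · exact ((isCompact_Icc.inter_left ht).image_of_continuousOn
        (hγ.mono inter_subset_right)).isClosed
    · ext z
      constructor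
      · rintro ⟨h2, h3⟩
        exact ⟨⟨ρ z, ⟨h2, (hρ z h3).1⟩, (hρ z h3).2⟩, h3⟩
      · rintro ⟨⟨s, ⟨hs, hs'⟩, rfl⟩, h3⟩
        refine ⟨?_, h3⟩
        have : ρ (γ s) = s := hi (hρ _ h3).1 hs' (hρ _ h3).2
        simpa [this] using hs
  refine ⟨fun z => l (ρ z), hl.comp_continuousOn hρc, fun z hz => ?_⟩
  rw [hle, hπi _ (hρ z hz).1, (hρ z hz).2]

/-- Gluing logarithms along a cyclic chain of closed sets. -/
theorem exists_log_cycle {N : ℕ} [NeZero N] {A : Fin N → Set X} (hA : ∀ k, IsClosed (A k))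
    {x : Fin N → X} (hx : ∀ k, x k ∈ A k) (hx' : ∀ k, x (k + 1) ∈ A k)
    (hmeet : ∀ k l, k ≠ l → ∀ z ∈ A k, z ∈ A l →
      (l = k + 1 ∧ z = x l) ∨ (k = l + 1 ∧ z = x k))
    {f : X → ℂ} {L : Fin N → X → ℂ} (hL : ∀ k, IsLog f (A k) (L k))
    (hsum : ∑ k, (L k (x (k + 1)) - L k (x k)) = 0) :
    ∃ M, IsLog f (⋃ k, A k) M := by
  classical
  let E : Fin N → ℂ := fun k => L k (x (k + 1)) - L (k + 1) (x (k + 1))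
  have hE1 : ∀ k, Complex.exp (E k) = 1 := by
    intro k
    simp only [E]
    rw [Complex.exp_sub, (hL k).2 _ (hx' k), (hL (k + 1)).2 _ (hx (k + 1)), div_self]
    rw [← (hL k).2 _ (hx' k)]; exact Complex.exp_ne_zero _
  have hEs : ∑ k, E k = 0 := by
    rw [← hsum]
    simp only [E, Finset.sum_sub_distrib]
    congr 1
    exact Equiv.sum_comp (Equiv.addRight (1 : Fin N)) fun k => L k (x k)
  -- partial sums
  obtain ⟨t, ht1, ht⟩ : ∃ t : Fin N → ℂ, (∀ k, Complex.exp (t k) = 1) ∧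
      ∀ k, t (k + 1) = t k + E k := by
    obtain ⟨N', rfl⟩ : ∃ N', N = N' + 1 := ⟨N - 1, (Nat.succ_pred (NeZero.ne N)).symm⟩
    let e : ℕ → ℂ := fun j => if h : j < N' + 1 then E ⟨j, h⟩ else 0
    have he : ∀ k : Fin (N' + 1), e k = E k := fun k => dif_pos k.2
    refine ⟨fun k => ∑ j ∈ Finset.range k, e j, ?_, ?_⟩
    · intro k
      rw [Complex.exp_sum]
      apply Finset.prod_eq_one
      intro j hj
      have : j < N' + 1 := lt_trans (Finset.mem_range.1 hj) k.2
      simp only [e, dif_pos this, hE1]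
    · intro k
      dsimp only
      rw [← he k, ← Finset.sum_range_succ]
      rcases eq_or_ne k (Fin.last N') with rfl | hk
      · rw [Fin.last_add_one]
        simp only [Fin.val_last, Fin.val_zero, Finset.range_zero, Finset.sum_empty]
        rw [← hEs, Finset.sum_range]
        exact (Finset.sum_congr rfl fun k _ => (he k)).symm
      · rw [Fin.val_add_one_of_lt (Fin.lt_last_iff_ne_last.2 hk)]
  let M : X → ℂ := fun z => if h : ∃ k, z ∈ A k then L h.choose z + t h.choose else 0
  have hM : ∀ k, ∀ z ∈ A k, M z = L k z + t k := by
    intro k z hz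
    have h : ∃ k, z ∈ A k := ⟨k, hz⟩
    have hM1 : M z = L h.choose z + t h.choose := dif_pos h
    rw [hM1]
    have hl := h.choose_spec
    generalize h.choose = l at hl
    by_cases hkl : k = l
    · rw [hkl]
    rcases hmeet k l hkl z hz hl with ⟨rfl, rfl⟩ | ⟨rfl, rfl⟩
    · rw [ht]; simp only [E]; ring
    · rw [ht]; simp only [E]; ring
  refine ⟨M, ?_, ?_⟩
  · apply LocallyFinite.continuousOn_iUnion (locallyFinite_of_finite _) hA
    intro k
    exact ((hL k).1.add continuousOn_const).congr (hM k)
  · intro z hz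
    obtain ⟨k, hk⟩ := mem_iUnion.1 hz
    rw [hM k z hk, Complex.exp_add, ht1, mul_one, (hL k).2 z hk]

end general
end HullAux

namespace HullAux

/-- A stereographic-type chart with centre `o`. -/
structure Chart (X : Type*) [TopologicalSpace X] where
  e : OpenPartialHomeomorph X ℂ
  o : X
  hs : e.source = {o}ᶜ
  ht : e.target = univ

/-- `A` is an arc from `x` to `y`. -/
def ArcFrom {X : Type*} [TopologicalSpace X] (A : Set X) (x y : X) : Prop :=
  ∃ f : ℝ → X, ContinuousOn f (Icc 0 1) ∧ InjOn f (Icc 0 1) ∧ f 0 = x ∧ f 1 = y ∧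
    A = f '' Icc 0 1

section arcs
variable {X : Type*} [TopologicalSpace X] {A : Set X} {x y : X}

theorem ArcFrom.isCompact (h : ArcFrom A x y) : IsCompact A := by
  obtain ⟨f, hf, -, -, -, rfl⟩ := h
  exact isCompact_Icc.image_of_continuousOn hf

theorem ArcFrom.isPreconnected (h : ArcFrom A x y) : IsPreconnected A := by
  obtain ⟨f, hf, -, -, -, rfl⟩ := h
  exact isPreconnected_Icc.image _ hf

theorem ArcFrom.left_mem (h : ArcFrom A x y) : x ∈ A := by
  obtain ⟨f, hf, -, rfl, -, rfl⟩ := h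
  exact ⟨0, by simp, rfl⟩

theorem ArcFrom.right_mem (h : ArcFrom A x y) : y ∈ A := by
  obtain ⟨f, hf, -, -, rfl, rfl⟩ := h
  exact ⟨1, by simp, rfl⟩

theorem ArcFrom.exists_log [T2Space X] (h : ArcFrom A x y) {f : X → ℂ} (hf : ContinuousOn f A)
    (h0 : ∀ z ∈ A, f z ≠ 0) : ∃ L, IsLog f A L := by
  obtain ⟨γ, hγ, hi, -, -, hA⟩ := h
  exact exists_log_arc hγ hi hA hf h0

theorem ArcFrom.exists_interior (h : ArcFrom A x y) : ∃ p ∈ A, p ≠ x ∧ p ≠ y := by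
  obtain ⟨f, hf, hi, rfl, rfl, rfl⟩ := h
  refine ⟨f (1 / 2), ⟨1 / 2, by norm_num, rfl⟩, fun h => ?_, fun h => ?_⟩
  · have := hi (by norm_num) (by norm_num) h; norm_num at this
  · have := hi (by norm_num) (by norm_num) h; norm_num at this

/-- An interior point splits the arc. -/
theorem ArcFrom.split (h : ArcFrom A x y) [T2Space X] {p : X} (hp : p ∈ A) :
    ∃ A₁ A₂ : Set X, IsClosed A₁ ∧ IsClosed A₂ ∧ A = A₁ ∪ A₂ ∧ A₁ ∩ A₂ ⊆ {p} ∧ x ∈ A₁ ∧ y ∈ A₂ := by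
  obtain ⟨f, hf, hi, rfl, rfl, rfl⟩ := h
  obtain ⟨t, ht, rfl⟩ := hp
  have h1 : Icc 0 t ⊆ Icc (0 : ℝ) 1 := Icc_subset_Icc_right ht.2
  have h2 : Icc t 1 ⊆ Icc (0 : ℝ) 1 := Icc_subset_Icc_left ht.1
  refine ⟨f '' Icc 0 t, f '' Icc t 1, (isCompact_Icc.image_of_continuousOn (hf.mono h1)).isClosed,
    (isCompact_Icc.image_of_continuousOn (hf.mono h2)).isClosed, ?_, ?_, ?_, ?_⟩
  · rw [← image_union, Icc_union_Icc_eq_Icc ht.1 ht.2]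
  · rintro _ ⟨⟨s, hs, rfl⟩, ⟨s', hs', h⟩⟩
    have := hi (h2 hs') (h1 hs) h
    subst this
    have : s' = t := le_antisymm hs.2 hs'.1
    simp [this]
  · exact ⟨0, ⟨le_rfl, ht.1⟩, rfl⟩
  · exact ⟨1, ⟨ht.2, le_rfl⟩, rfl⟩

end arcs

namespace Chart
variable {X : Type*} [TopologicalSpace X] (P : Chart X)

/-- The function whose argument variation is the angle seen from `q`. -/
def fq (q z : X) : ℂ := by
  classical exact if q = P.o then 1 else P.e z - P.e q

theorem fq_o (z : X) : P.fq P.o z = 1 := by simp [fq]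

theorem fq_ne_o {q : X} (hq : q ≠ P.o) (z : X) : P.fq q z = P.e z - P.e q := by simp [fq, hq]


theorem mem_source {z : X} (hz : z ≠ P.o) : z ∈ P.e.source := by rw [P.hs]; exact hz

theorem continuousOn_e {A : Set X} (hA : P.o ∉ A) : ContinuousOn P.e A :=
  P.e.continuousOn.mono fun z hz => P.mem_source (fun h => hA (h ▸ hz))

theorem fq_cont {A : Set X} (hA : P.o ∉ A) (q : X) : ContinuousOn (P.fq q) A := by
  by_cases hq : q = P.o
  · subst hq
    exact continuousOn_const.congr fun z _ => P.fq_o z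
  · exact ((P.continuousOn_e hA).sub continuousOn_const).congr fun z _ => P.fq_ne_o hq z

theorem e_inj {q z : X} (hq : q ≠ P.o) (hz : z ≠ P.o) (h : P.e z = P.e q) : z = q :=
  P.e.injOn (P.mem_source hz) (P.mem_source hq) h

theorem fq_ne {q z : X} (hz : z ≠ q) (ho : z ≠ P.o) : P.fq q z ≠ 0 := by
  by_cases hq : q = P.o
  · subst hq; simp [fq_o]
  · rw [P.fq_ne_o hq, sub_ne_zero]
    exact fun h => hz (P.e_inj hq ho h)

theorem symm_cont : Continuous P.e.symm := by
  rw [← continuousOn_univ, ← P.ht]; exact P.e.continuousOn_symm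

theorem e_symm (w : ℂ) : P.e (P.e.symm w) = w := P.e.right_inv (by simp [P.ht])

theorem symm_ne (w : ℂ) : P.e.symm w ≠ P.o := by
  have := P.e.map_target (x := w) (by simp [P.ht])
  rw [P.hs] at this; exact this

theorem symm_e {z : X} (hz : z ≠ P.o) : P.e.symm (P.e z) = z := P.e.left_inv (P.mem_source hz)

theorem eventually_large [T2Space X] (R : ℝ) : ∀ᶠ q in 𝓝 P.o, q ≠ P.o → R < ‖P.e q‖ := by
  have h1 : IsClosed (P.e.symm '' Metric.closedBall 0 R) :=
    ((isCompact_closedBall _ _).image P.symm_cont).isClosed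
  have h2 : P.o ∈ (P.e.symm '' Metric.closedBall 0 R)ᶜ := by
    rintro ⟨w, -, hw⟩; exact P.symm_ne w hw
  filter_upwards [h1.isOpen_compl.mem_nhds h2] with q hq hqo
  by_contra hle
  exact hq ⟨P.e q, by simpa using not_lt.1 hle, P.symm_e hqo⟩

theorem frontier_comp_subset [LocallyConnectedSpace X] {K : Set X} (hK : IsClosed K) (q : X) :
    closure (connectedComponentIn Kᶜ q) ⊆ connectedComponentIn Kᶜ q ∪ K := by
  intro z hz
  by_contra hcon
  rw [mem_union, not_or] at hcon
  have hzK : z ∈ Kᶜ := hcon.2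
  have ho : IsOpen (connectedComponentIn Kᶜ z) := hK.isOpen_compl.connectedComponentIn
  obtain ⟨y, hy1, hy2⟩ := mem_closure_iff.1 hz _ ho (mem_connectedComponentIn hzK)
  have h1 := connectedComponentIn_eq hy1
  have h2 := connectedComponentIn_eq hy2
  exact hcon.1 (by rw [h2, ← h1]; exact mem_connectedComponentIn hzK)

/-- The key extension argument. -/
theorem pow_log_eq_zero [CompactSpace X] [T2Space X] [LocallyConnectedSpace X]
    {K : Set X} (hK : IsClosed K) (hoK : P.o ∉ K)
    {q : X} (hqK : q ∉ K) (hU : P.o ∉ connectedComponentIn Kᶜ q) {n : ℤ} {g : X → ℂ}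
    (hg : ContinuousOn g (closure (connectedComponentIn Kᶜ q)))
    (hg0 : ∀ z ∈ closure (connectedComponentIn Kᶜ q), g z ≠ 0) {L : X → ℂ}
    (hL : IsLog (fun z => P.fq q z ^ n * g z) K L) : n = 0 := by
  classical
  set U := connectedComponentIn Kᶜ q with hUdef
  have hUo : IsOpen U := hK.isOpen_compl.connectedComponentIn
  have hqU : q ∈ U := mem_connectedComponentIn hqK
  have hqo : q ≠ P.o := fun h => hU (h ▸ hqU)
  have hcl : closure U ⊆ U ∪ K := frontier_comp_subset hK q
  have hocl : P.o ∉ closure U := fun h => (hcl h).elim hU hoK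
  -- Tietze
  obtain ⟨ψ, hψ⟩ := ContinuousMap.exists_restrict_eq (Y := ℂ) hK
    (⟨K.domRestrict L, continuousOn_iff_continuous_domRestrict.1 hL.1⟩ : C(K, ℂ))
  have hψK : ∀ z ∈ K, ψ z = L z := fun z hz => congrArg (fun f : C(K, ℂ) => f ⟨z, hz⟩) hψ
  let σ := P.e.symm
  have hσ : Continuous σ := P.symm_cont
  let H : ℂ → ℂ := fun w => if σ w ∈ U then Complex.exp (ψ (σ w)) / g (σ w) else (w - P.e q) ^ n
  have hHS : ∀ w ∈ σ ⁻¹' closure U, H w = Complex.exp (ψ (σ w)) / g (σ w) := by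
    intro w hw
    by_cases h : σ w ∈ U
    · exact if_pos h
    · have hwK : σ w ∈ K := (hcl hw).resolve_left h
      have : H w = (w - P.e q) ^ n := if_neg h
      have h5 := hL.2 _ hwK
      simp only [P.fq_ne_o hqo] at h5
      rw [this, hψK _ hwK, h5, mul_div_assoc, div_self (hg0 _ hw), mul_one]
      simp only [σ, P.e_symm]
  have hHT : ∀ w ∈ σ ⁻¹' Uᶜ, H w = (w - P.e q) ^ n := fun w hw => if_neg hw
  have hne : ∀ w ∈ σ ⁻¹' Uᶜ, w - P.e q ≠ 0 := by
    intro w hw h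
    apply hw
    rw [sub_eq_zero.1 h, show σ (P.e q) = q from P.symm_e hqo]
    exact hqU
  have hcov : σ ⁻¹' closure U ∪ σ ⁻¹' Uᶜ = univ := by
    ext w
    simp only [mem_union, mem_preimage, mem_compl_iff, mem_univ, iff_true]
    by_cases h : σ w ∈ U
    · exact Or.inl (subset_closure h)
    · exact Or.inr h
  have hHc : Continuous H := by
    rw [← continuousOn_univ, ← hcov]
    apply ContinuousOn.union_of_isClosed _ _ (isClosed_closure.preimage hσ)
      (hUo.isClosed_compl.preimage hσ)
    · refine ContinuousOn.congr ?_ hHS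
      refine ContinuousOn.div ?_ ?_ fun w hw => hg0 _ hw
      · exact (Complex.continuous_exp.comp (ψ.continuous.comp hσ)).continuousOn
      · exact hg.comp hσ.continuousOn fun w hw => hw
    · refine ContinuousOn.congr ?_ hHT
      exact (continuousOn_id.sub continuousOn_const).zpow₀ n fun w hw => Or.inl (hne w hw)
  have hH0 : ∀ w, H w ≠ 0 := by
    intro w
    have : w ∈ σ ⁻¹' closure U ∪ σ ⁻¹' Uᶜ := by rw [hcov]; trivial
    rcases this with h | h
    · rw [hHS w h]
      exact div_ne_zero (Complex.exp_ne_zero _) (hg0 _ h)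
    · rw [hHT w h]
      exact zpow_ne_zero _ (hne w h)
  obtain ⟨M, hM, hMe⟩ := exists_log_plane hHc hH0
  have hb : Bornology.IsBounded (P.e '' closure U) :=
    (isClosed_closure.isCompact.image_of_continuousOn (P.continuousOn_e hocl)).isBounded
  obtain ⟨R, hR0, hR⟩ := hb.subset_ball_lt 0 (P.e q)
  apply no_log_circle (c := P.e q) hR0 (n := n) (L := M)
  refine ⟨hM.continuousOn, fun w hw => ?_⟩
  rw [hMe, hHT]
  intro h
  have := hR ⟨σ w, subset_closure h, P.e_symm w⟩
  simp only [Metric.mem_sphere, Metric.mem_ball] at hw this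
  linarith

theorem mem_comp_of_log [CompactSpace X] [T2Space X] [LocallyConnectedSpace X]
    {K : Set X} (hK : IsClosed K) (hoK : P.o ∉ K) {q : X} (hqK : q ∉ K) {L : X → ℂ}
    (hL : IsLog (P.fq q) K L) : q ∈ connectedComponentIn Kᶜ P.o := by
  by_contra hcon
  have hU : P.o ∉ connectedComponentIn Kᶜ q := by
    intro h
    rw [← connectedComponentIn_eq h] at hcon
    exact hcon (mem_connectedComponentIn hqK)
  have := P.pow_log_eq_zero hK hoK hqK hU (n := 1) (g := fun _ => 1) continuousOn_const
    (fun _ _ => one_ne_zero) (L := L) (by simpa using hL)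
  norm_num at this

/-- Variation of the logarithm along `A` seen from `q`. -/
def var (A : Set X) (q x y : X) : ℂ := by
  classical exact if h : ∃ L, IsLog (P.fq q) A L then h.choose y - h.choose x else 0

theorem var_eq {A : Set X} (hA : IsPreconnected A) {q x y : X} (hx : x ∈ A) (hy : y ∈ A)
    {L : X → ℂ} (hL : IsLog (P.fq q) A L) : P.var A q x y = L y - L x := by
  have h : ∃ L, IsLog (P.fq q) A L := ⟨L, hL⟩
  have : P.var A q x y = h.choose y - h.choose x := dif_pos h
  rw [this]
  exact h.choose_spec.var_eq hA hL hx hy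

theorem var_o {A : Set X} (hA : IsPreconnected A) {x y : X} (hx : x ∈ A) (hy : y ∈ A) :
    P.var A P.o x y = 0 := by
  rw [P.var_eq hA hx hy (L := fun _ => 0) ⟨continuousOn_const, fun z _ => by simp [fq_o]⟩]
  simp

theorem arc_log [T2Space X] {A : Set X} {x y : X} (hA : ArcFrom A x y) (hoA : P.o ∉ A) {q : X}
    (hq : q ∉ A) : ∃ L, IsLog (P.fq q) A L :=
  hA.exists_log (P.fq_cont hoA q) fun _ hz => P.fq_ne (fun h => hq (h ▸ hz)) (fun h => hoA (h ▸ hz))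

theorem exp_var [T2Space X] {A : Set X} {x y : X} (hA : ArcFrom A x y) (hoA : P.o ∉ A) {q : X}
    (hq : q ∉ A) : Complex.exp (P.var A q x y) = P.fq q y / P.fq q x := by
  obtain ⟨L, hL⟩ := P.arc_log hA hoA hq
  rw [P.var_eq hA.isPreconnected hA.left_mem hA.right_mem hL, Complex.exp_sub,
    hL.2 _ hA.left_mem, hL.2 _ hA.right_mem]

theorem var_cont_aux [T2Space X] {A : Set X} {x y : X} (hA : ArcFrom A x y) (hoA : P.o ∉ A) {q₀ : X}
    (hq₀ : q₀ ∉ A) (c : X → ℂ) (r : X → X → ℂ)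
    (hc : ∀ᶠ q in 𝓝 q₀, c q ≠ 0)
    (hr : ∀ᶠ q in 𝓝 q₀, ∀ z ∈ A, 0 < (r q z).re)
    (hrc : ∀ᶠ q in 𝓝 q₀, ContinuousOn (r q) A)
    (hfac : ∀ᶠ q in 𝓝 q₀, ∀ z ∈ A, P.fq q z = P.fq q₀ z * c q * r q z)
    (hlim : ∀ z ∈ A, Filter.Tendsto (fun q => r q z) (𝓝 q₀) (𝓝 1)) :
    ContinuousAt (fun q => P.var A q x y) q₀ := by
  obtain ⟨L, hL⟩ := P.arc_log hA hoA hq₀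
  have h0 := P.var_eq hA.isPreconnected hA.left_mem hA.right_mem hL
  have hev : ∀ᶠ q in 𝓝 q₀, P.var A q x y =
      (L y - L x) + (Complex.log (r q y) - Complex.log (r q x)) := by
    filter_upwards [hc, hr, hrc, hfac] with q h1 h2 h3 h4
    rw [P.var_eq hA.isPreconnected hA.left_mem hA.right_mem
      (L := fun z => L z + Complex.log (c q) + Complex.log (r q z))]
    · ring
    · refine ⟨(hL.1.add continuousOn_const).add (h3.clog fun z hz => Or.inl (h2 z hz)), ?_⟩
      intro z hz
      have : r q z ≠ 0 := fun h => by have := h2 z hz; simp [h] at this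
      rw [Complex.exp_add, Complex.exp_add, hL.2 z hz, Complex.exp_log h1, Complex.exp_log this,
        h4 z hz]
  have hl : ∀ z ∈ A, Filter.Tendsto (fun q => Complex.log (r q z)) (𝓝 q₀) (𝓝 0) := by
    intro z hz
    have := (hlim z hz).clog (by simp)
    simpa using this
  unfold ContinuousAt
  dsimp only
  rw [h0, Filter.tendsto_congr' hev]
  simpa using (tendsto_const_nhds (x := L y - L x)).add
    ((hl y hA.right_mem).sub (hl x hA.left_mem))

theorem var_cont [T2Space X] {A : Set X} {x y : X} (hA : ArcFrom A x y) (hoA : P.o ∉ A) {q₀ : X}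
    (hq₀ : q₀ ∉ A) : ContinuousAt (fun q => P.var A q x y) q₀ := by
  classical
  have hcomp := hA.isCompact.image_of_continuousOn (P.continuousOn_e hoA)
  by_cases ho : q₀ = P.o
  · subst ho
    obtain ⟨R, hR0, hR⟩ := hcomp.isBounded.subset_ball_lt 0 0
    have hAR : ∀ z ∈ A, ‖P.e z‖ < R := fun z hz => by simpa using hR (mem_image_of_mem _ hz)
    apply P.var_cont_aux hA hoA hq₀ (fun q => if q = P.o then 1 else - P.e q)
      (fun q z => if q = P.o then 1 else 1 - P.e z / P.e q)
    · filter_upwards [P.eventually_large R] with q hq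
      by_cases h : q = P.o
      · simp [h]
      · have := hq h
        simp only [h, if_false, ne_eq, neg_eq_zero]
        intro h0; rw [h0, norm_zero] at this; linarith
    · filter_upwards [P.eventually_large R] with q hq z hz
      by_cases h : q = P.o
      · simp [h]
      · have h1 := hq h
        have h2 := hAR z hz
        simp only [h, if_false]
        have h3 : ‖P.e z / P.e q‖ < 1 := by
          rw [norm_div, div_lt_one (by linarith)]; linarith
        have := Complex.re_le_norm (P.e z / P.e q)
        simp only [Complex.sub_re, Complex.one_re]
        linarith
    · refine Filter.Eventually.of_forall fun q => ?_
      by_cases h : q = P.o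
      · simp only [h, if_true]; exact continuousOn_const
      · simp only [h, if_false]
        exact continuousOn_const.sub ((P.continuousOn_e hoA).div_const _)
    · filter_upwards [P.eventually_large R] with q hq z hz
      by_cases h : q = P.o
      · simp [h, fq_o]
      · have h1 := hq h
        have : P.e q ≠ 0 := by intro h0; rw [h0, norm_zero] at h1; linarith
        simp only [h, if_false, fq_o, P.fq_ne_o h]
        field_simp
        ring
    · intro z hz
      rw [Metric.tendsto_nhds]
      intro ε hε
      filter_upwards [P.eventually_large (R / ε)] with q hq
      by_cases h : q = P.o
      · simp [h, hε]
      · have h1 := hq h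
        have h2 := hAR z hz
        have h4 : 0 < R / ε := by positivity
        have h5 : R < ‖P.e q‖ * ε := (div_lt_iff₀ hε).1 h1
        simp only [h, if_false, dist_eq_norm]
        rw [show 1 - P.e z / P.e q - 1 = -(P.e z / P.e q) by ring, norm_neg, norm_div,
          div_lt_iff₀ (by linarith)]
        linarith
  · have hne : ∀ᶠ q in 𝓝 q₀, q ≠ P.o := isOpen_ne.mem_nhds ho
    have hec : ContinuousAt P.e q₀ := P.e.continuousAt (P.mem_source ho)
    have hzne : ∀ z ∈ A, P.e z - P.e q₀ ≠ 0 := fun z hz => by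
      have := P.fq_ne (q := q₀) (z := z) (fun h => hq₀ (h ▸ hz)) (fun h => hoA (h ▸ hz))
      rwa [P.fq_ne_o ho] at this
    obtain ⟨d, hd0, hd⟩ : ∃ d > 0, ∀ z ∈ A, d ≤ ‖P.e z - P.e q₀‖ := by
      have hnot : P.e q₀ ∈ (P.e '' A)ᶜ := by
        rintro ⟨z, hz, h⟩
        exact hzne z hz (sub_eq_zero.2 h)
      obtain ⟨d, hd, hb⟩ := Metric.isOpen_iff.1 hcomp.isClosed.isOpen_compl _ hnot
      refine ⟨d, hd, fun z hz => ?_⟩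
      by_contra hlt
      exact hb (show P.e z ∈ Metric.ball (P.e q₀) d by simpa [dist_eq_norm] using hlt)
        (mem_image_of_mem _ hz)
    apply P.var_cont_aux hA hoA hq₀ (fun _ => 1)
      (fun q z => (P.e z - P.e q) / (P.e z - P.e q₀))
    · simp
    · have : ∀ᶠ q in 𝓝 q₀, dist (P.e q) (P.e q₀) < d := hec (Metric.ball_mem_nhds _ hd0)
      filter_upwards [this] with q hq z hz
      have h3 : ‖(P.e q - P.e q₀) / (P.e z - P.e q₀)‖ < 1 := by
        rw [norm_div, div_lt_one (norm_pos_iff.2 (hzne z hz)), ← dist_eq_norm]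
        exact lt_of_lt_of_le hq (hd z hz)
      have h4 : (P.e z - P.e q) / (P.e z - P.e q₀) =
          1 - (P.e q - P.e q₀) / (P.e z - P.e q₀) := by
        have := hzne z hz
        field_simp
        ring
      have := Complex.re_le_norm ((P.e q - P.e q₀) / (P.e z - P.e q₀))
      rw [h4, Complex.sub_re, Complex.one_re]
      linarith
    · refine Filter.Eventually.of_forall fun q => ?_
      exact ((P.continuousOn_e hoA).sub continuousOn_const).div
        ((P.continuousOn_e hoA).sub continuousOn_const) hzne
    · filter_upwards [hne] with q hq z hz
      have := hzne z hz
      rw [P.fq_ne_o hq, P.fq_ne_o ho]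
      field_simp
    · intro z hz
      have h1 : ContinuousAt (fun q => (P.e z - P.e q) / (P.e z - P.e q₀)) q₀ :=
        (continuousAt_const.sub hec).div_const _
      have := h1.tendsto
      rwa [div_self (hzne z hz)] at this

/-- Two angle functions along arcs with the same pair of distinct ends differ somewhere. -/
theorem exists_ne {A B : Set X} (hA : IsClosed A) (hB : IsClosed B) {x y : X} (hxy : x ≠ y)
    (hxo : x ≠ P.o) (hyo : y ≠ P.o) (hAB : A ∩ B ⊆ {x, y}) {ΘA ΘB : X → ℂ}
    (hcA : ∀ q, q ∉ A → ContinuousAt ΘA q) (hcB : ∀ q, q ∉ B → ContinuousAt ΘB q)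
    (heA : ∀ q, q ∉ A → Complex.exp (ΘA q) = P.fq q y / P.fq q x)
    (heB : ∀ q, q ∉ B → Complex.exp (ΘB q) = P.fq q y / P.fq q x) :
    ∃ q, q ∉ A ∧ q ∉ B ∧ ΘA q ≠ ΘB q := by
  classical
  by_contra! hcon
  let σ := P.e.symm
  have hσ : Continuous σ := P.symm_cont
  have hne : P.e y - P.e x ≠ 0 := by
    rw [sub_ne_zero]; exact fun h => hxy (P.e_inj hxo hyo h).symm
  let R := ‖P.e y - P.e x‖ / 2
  have hR : 0 < R := by have := norm_pos_iff.2 hne; positivity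
  have hnot : ∀ w ∈ Metric.sphere (P.e x) R, w ≠ P.e x ∧ ‖w - P.e x‖ < ‖P.e y - P.e x‖ := by
    intro w hw
    have h1 : ‖w - P.e x‖ = R := by simpa [dist_eq_norm] using hw
    constructor
    · rintro rfl; simp at h1; linarith
    · rw [h1]; simp only [R] at hR ⊢; linarith
  have hnAB : ∀ w ∈ Metric.sphere (P.e x) R, σ w ∈ A → σ w ∉ B := by
    intro w hw h1 h2
    have hew : P.e (σ w) = w := P.e_symm w
    rcases hAB ⟨h1, h2⟩ with h | h
    · rw [h] at hew; exact (hnot w hw).1 hew.symm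
    · rw [mem_singleton_iff.1 h] at hew
      have := (hnot w hw).2
      rw [hew] at this; exact lt_irrefl _ this
  let M : ℂ → ℂ := fun w => if σ w ∈ A then ΘB (σ w) else ΘA (σ w)
  have hMc : ContinuousOn M (Metric.sphere (P.e x) R) := by
    intro w hw
    apply ContinuousAt.continuousWithinAt
    by_cases h : σ w ∈ A
    · have hb := hnAB w hw h
      have : ContinuousAt (fun w => ΘB (σ w)) w :=
        ContinuousAt.comp (f := σ) (hcB _ hb) hσ.continuousAt
      refine this.congr ?_
      filter_upwards [(hB.isOpen_compl.preimage hσ).mem_nhds hb] with w' hw'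
      by_cases h' : σ w' ∈ A
      · simp only [M, if_pos h']
      · simp only [M, if_neg h']; exact (hcon _ h' hw').symm
    · have : ContinuousAt (fun w => ΘA (σ w)) w :=
        ContinuousAt.comp (f := σ) (hcA _ h) hσ.continuousAt
      refine this.congr ?_
      filter_upwards [(hA.isOpen_compl.preimage hσ).mem_nhds h] with w' hw'
      have h' : σ w' ∉ A := hw'
      simp only [M, if_neg h']
  have hMe : ∀ w ∈ Metric.sphere (P.e x) R, Complex.exp (M w) = (P.e y - w) / (P.e x - w) := by
    intro w hw
    have hh : ∀ z, P.fq (σ w) z = P.e z - w := fun z => by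
      rw [P.fq_ne_o (P.symm_ne w)]; rw [show P.e (σ w) = w from P.e_symm w]
    by_cases h : σ w ∈ A
    · simp only [M, if_pos h]; rw [heB _ (hnAB w hw h), hh, hh]
    · simp only [M, if_neg h]; rw [heA _ h, hh, hh]
  have hre : ∀ w ∈ Metric.sphere (P.e x) R, 0 < ((P.e y - w) / (P.e y - P.e x)).re := by
    intro w hw
    have h4 : (P.e y - w) / (P.e y - P.e x) = 1 - (w - P.e x) / (P.e y - P.e x) := by
      field_simp; ring
    have h3 : ‖(w - P.e x) / (P.e y - P.e x)‖ < 1 := by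
      rw [norm_div, div_lt_one (norm_pos_iff.2 hne)]; exact (hnot w hw).2
    have := Complex.re_le_norm ((w - P.e x) / (P.e y - P.e x))
    rw [h4, Complex.sub_re, Complex.one_re]; linarith
  have := no_log_circle (c := P.e x) hR (n := 1) (L := fun w =>
    Complex.log ((P.e y - w) / (P.e y - P.e x)) - M w + Complex.log (-(P.e y - P.e x))) ?_
  · norm_num at this
  · refine ⟨?_, fun w hw => ?_⟩
    · refine ((ContinuousOn.clog ?_ fun w hw => Or.inl (hre w hw)).sub hMc).add continuousOn_const
      exact (continuousOn_const.sub continuousOn_id).div_const _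
    · have h1 : (P.e y - w) / (P.e y - P.e x) ≠ 0 := fun h => by
        have := hre w hw; rw [h] at this; simp at this
      have h2 : P.e y - w ≠ 0 := fun h => h1 (by rw [h, zero_div])
      have h3 : P.e x - w ≠ 0 := sub_ne_zero.2 (hnot w hw).1.symm
      rw [Complex.exp_add, Complex.exp_sub, Complex.exp_log h1, hMe w hw,
        Complex.exp_log (neg_ne_zero.2 hne)]
      simp only [zpow_one]
      field_simp
      ring

end Chart
end HullAux

namespace HullAux

section drawing
variable {n : ℕ} {X : Type*} [TopologicalSpace X] (D : GoodDrawing n X) (P : Chart X)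

/-- Variation of the logarithm seen from `q` along the edge from `a` to `b`. -/
def th (a b : Fin n) (q : X) : ℂ :=
  if a = b then 0 else P.var (D.arc a b) q (D.vtx a) (D.vtx b)

/-- Winding of the oriented 3-cycle `a b c` around `q` (times `2πi`). -/
def wd (a b c : Fin n) (q : X) : ℂ := th D P a b q + th D P b c q + th D P c a q

theorem var_symm (A : Set X) (q x y : X) : P.var A q y x = - P.var A q x y := by
  simp only [Chart.var]
  split_ifs
  · ring
  · simp

theorem th_self (a : Fin n) (q : X) : th D P a a q = 0 := by simp [th]

theorem th_symm (a b : Fin n) (q : X) : th D P b a q = - th D P a b q := by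
  by_cases h : a = b
  · subst h; simp [th]
  · simp only [th, h, Ne.symm h, if_false]
    rw [D.arc_symm b a]
    exact var_symm P _ _ _ _

theorem wd_rot (a b c : Fin n) (q : X) : wd D P b c a q = wd D P a b c q := by
  simp only [wd]; ring

theorem wd_swap (a b c : Fin n) (q : X) : wd D P b a c q = - wd D P a b c q := by
  simp only [wd, th_symm D P a b, th_symm D P c a, th_symm D P c b]
  rw [th_symm D P b c]; ring

theorem wd_add (a b c d : Fin n) (q : X) :
    wd D P a b c q = wd D P a b d q + wd D P b c d q + wd D P c a d q := by
  simp only [wd, th_symm D P a d, th_symm D P b d, th_symm D P c d]; ring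

variable {D}
theorem arcFrom {a b : Fin n} (h : a ≠ b) : ArcFrom (D.arc a b) (D.vtx a) (D.vtx b) := D.isArc a b h

theorem arc_inter {a b c : Fin n} (hab : a ≠ b) (hac : a ≠ c) (hbc : b ≠ c) {z : X}
    (h1 : z ∈ D.arc a b) (h2 : z ∈ D.arc b c) : z = D.vtx b := by
  have := D.adj_arcs b a c hab.symm hbc hac
  have h : z ∈ D.arc b a ∩ D.arc b c := ⟨by rwa [D.arc_symm], h2⟩
  rw [this] at h
  exact h

variable {P}

theorem th_log {a b : Fin n} (h : a ≠ b) {q : X} {L : X → ℂ}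
    (hL : IsLog (P.fq q) (D.arc a b) L) : th D P a b q = L (D.vtx b) - L (D.vtx a) := by
  simp only [th, h, if_false]
  have := arcFrom (D := D) h
  exact P.var_eq this.isPreconnected this.left_mem this.right_mem hL

theorem th_o (a b : Fin n) : th D P a b P.o = 0 := by
  by_cases h : a = b
  · simp [th, h]
  · simp only [th, h, if_false]
    have := arcFrom (D := D) h
    exact P.var_o this.isPreconnected this.left_mem this.right_mem

theorem wd_o (a b c : Fin n) : wd D P a b c P.o = 0 := by simp [wd, th_o]

theorem tri_rot (a b c : Fin n) : D.tri b c a = D.tri a b c := by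
  simp only [GoodDrawing.tri, D.arc_symm b a, D.arc_symm c a]
  ext z; simp only [mem_union]; tauto

theorem tri_swap (a b c : Fin n) : D.tri b a c = D.tri a b c := by
  simp only [GoodDrawing.tri, D.arc_symm b a]
  ext z; simp only [mem_union]; tauto

theorem tri_eq (a b c : Fin n) : D.tri a b c = D.arc a b ∪ D.arc b c ∪ D.arc c a := by
  simp only [GoodDrawing.tri, D.arc_symm c a]

theorem not_tri {a b c : Fin n} {q : X} :
    q ∉ D.tri a b c ↔ q ∉ D.arc a b ∧ q ∉ D.arc b c ∧ q ∉ D.arc c a := by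
  rw [tri_eq]; simp only [mem_union, not_or, and_assoc]

variable (ho : ∀ a b, a ≠ b → P.o ∉ D.arc a b)
include ho

section T2
variable [T2Space X]

theorem vtx_ne_o {a b : Fin n} (h : a ≠ b) : D.vtx a ≠ P.o :=
  fun h' => ho a b h (h' ▸ (arcFrom h).left_mem)

theorem th_cont {a b : Fin n} {q : X} (hq : a ≠ b → q ∉ D.arc a b) :
    ContinuousAt (th D P a b) q := by
  by_cases h : a = b
  · subst h
    have : th D P a a = fun _ => 0 := by ext q; simp [th]
    rw [this]; exact continuousAt_const
  · have : th D P a b = fun q => P.var (D.arc a b) q (D.vtx a) (D.vtx b) := by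
      ext q; simp [th, h]
    rw [this]
    exact P.var_cont (arcFrom h) (ho a b h) (hq h)

theorem th_exp {a b : Fin n} (h : a ≠ b) {q : X} (hq : q ∉ D.arc a b) :
    Complex.exp (th D P a b q) = P.fq q (D.vtx b) / P.fq q (D.vtx a) := by
  simp only [th, h, if_false]
  exact P.exp_var (arcFrom h) (ho a b h) hq

theorem fq_vtx_ne {a b : Fin n} (h : a ≠ b) {q : X} (hq : q ∉ D.arc a b) :
    P.fq q (D.vtx a) ≠ 0 :=
  P.fq_ne (fun h' => hq (h' ▸ (arcFrom h).left_mem)) (vtx_ne_o ho h)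

theorem isClosed_arc {a b : Fin n} (h : a ≠ b) : IsClosed (D.arc a b) :=
  (arcFrom h).isCompact.isClosed

theorem tri_glue {a b c : Fin n} (hab : a ≠ b) (hac : a ≠ c) (hbc : b ≠ c)
    {A₀ : Set X} (hA₀ : IsClosed A₀) (hsub : A₀ ⊆ D.arc a b) (ha : D.vtx a ∈ A₀)
    (hb : D.vtx b ∈ A₀) {f L₀ L₁ L₂ : X → ℂ} (h₀ : IsLog f A₀ L₀) (h₁ : IsLog f (D.arc b c) L₁)
    (h₂ : IsLog f (D.arc c a) L₂)
    (hsum : (L₀ (D.vtx b) - L₀ (D.vtx a)) + (L₁ (D.vtx c) - L₁ (D.vtx b)) +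
      (L₂ (D.vtx a) - L₂ (D.vtx c)) = 0) :
    ∃ M, IsLog f (A₀ ∪ D.arc b c ∪ D.arc c a) M := by
  have hb' := arcFrom (D := D) hbc
  have hc' := arcFrom (D := D) hac.symm
  have i01 : ∀ z, z ∈ A₀ → z ∈ D.arc b c → z = D.vtx b := fun z h1 h2 =>
    arc_inter hab hac hbc (hsub h1) h2
  have i12 : ∀ z, z ∈ D.arc b c → z ∈ D.arc c a → z = D.vtx c := fun z h1 h2 =>
    arc_inter hbc hab.symm hac.symm h1 h2
  have i20 : ∀ z, z ∈ D.arc c a → z ∈ A₀ → z = D.vtx a := fun z h1 h2 =>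
    arc_inter hac.symm hbc.symm hab h1 (hsub h2)
  obtain ⟨M, hM⟩ := exists_log_cycle (N := 3) (A := ![A₀, D.arc b c, D.arc c a])
    (x := ![D.vtx a, D.vtx b, D.vtx c]) (f := f) (L := ![L₀, L₁, L₂])
    (by intro k; fin_cases k; exacts [hA₀, hb'.isCompact.isClosed, hc'.isCompact.isClosed])
    (by intro k; fin_cases k; exacts [ha, hb'.left_mem, hc'.left_mem])
    (by intro k; fin_cases k; exacts [hb, hb'.right_mem, hc'.right_mem])
    (by
      intro k l hkl z hk hl
      fin_cases k <;> fin_cases l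
      · exact absurd rfl hkl
      · exact Or.inl ⟨rfl, i01 z hk hl⟩
      · exact Or.inr ⟨rfl, i20 z hl hk⟩
      · exact Or.inr ⟨rfl, i01 z hl hk⟩
      · exact absurd rfl hkl
      · exact Or.inl ⟨rfl, i12 z hk hl⟩
      · exact Or.inl ⟨rfl, i20 z hk hl⟩
      · exact Or.inr ⟨rfl, i12 z hl hk⟩
      · exact absurd rfl hkl)
    (by intro k; fin_cases k; exacts [h₀, h₁, h₂])
    (by rw [Fin.sum_univ_three]; exact hsum)
  refine ⟨M, hM.mono ?_⟩
  rintro z ((hz | hz) | hz)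
  · exact mem_iUnion.2 ⟨0, hz⟩
  · exact mem_iUnion.2 ⟨1, hz⟩
  · exact mem_iUnion.2 ⟨2, hz⟩

variable {a b c : Fin n} (hab : a ≠ b) (hac : a ≠ c) (hbc : b ≠ c)
include hab hac hbc

theorem isClosed_tri : IsClosed (D.tri a b c) := by
  rw [tri_eq]
  exact ((isClosed_arc ho hab).union (isClosed_arc ho hbc)).union (isClosed_arc ho hac.symm)

theorem o_not_tri : P.o ∉ D.tri a b c :=
  not_tri.2 ⟨ho _ _ hab, ho _ _ hbc, ho _ _ hac.symm⟩

theorem wd_exp {q : X} (hq : q ∉ D.tri a b c) : Complex.exp (wd D P a b c q) = 1 := by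
  obtain ⟨h1, h2, h3⟩ := not_tri.1 hq
  rw [wd, Complex.exp_add, Complex.exp_add, th_exp ho hab h1, th_exp ho hbc h2,
    th_exp ho hac.symm h3]
  have := fq_vtx_ne ho hab h1
  have := fq_vtx_ne ho hbc h2
  have := fq_vtx_ne ho hac.symm h3
  field_simp

theorem wd_int {q : X} (hq : q ∉ D.tri a b c) :
    ∃ m : ℤ, wd D P a b c q = m * (2 * Real.pi * Complex.I) :=
  Complex.exp_eq_one_iff.1 (wd_exp ho hab hac hbc hq)

theorem wd_cont {q : X} (hq : q ∉ D.tri a b c) : ContinuousAt (wd D P a b c) q := by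
  obtain ⟨h1, h2, h3⟩ := not_tri.1 hq
  exact ((th_cont ho fun _ => h1).add (th_cont ho fun _ => h2)).add (th_cont ho fun _ => h3)

theorem wd_const {S : Set X} (hS : IsPreconnected S) (hSt : ∀ q ∈ S, q ∉ D.tri a b c) {q q' : X}
    (hq : q ∈ S) (hq' : q' ∈ S) : wd D P a b c q = wd D P a b c q' :=
  const_of_exp_one hS
    (fun z hz => (wd_cont ho hab hac hbc (hSt z hz)).continuousWithinAt)
    (fun z hz => wd_exp ho hab hac hbc (hSt z hz)) hq hq'

theorem wd_comp {q q' : X} (hq : q ∉ D.tri a b c)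
    (h : q' ∈ connectedComponentIn (D.tri a b c)ᶜ q) : wd D P a b c q' = wd D P a b c q :=
  wd_const ho hab hac hbc isPreconnected_connectedComponentIn
    (fun _ hz => connectedComponentIn_subset _ _ hz) h (mem_connectedComponentIn hq)

theorem exists_inside : ∃ q, q ∉ D.tri a b c ∧ wd D P a b c q ≠ 0 := by
  have hA := isClosed_arc ho hab
  have hB := (isClosed_arc ho hbc).union (isClosed_arc ho hac.symm)
  obtain ⟨q, h1, h2, h3⟩ := P.exists_ne hA hB (x := D.vtx a) (y := D.vtx b)
    (fun h => hab (D.vtx_inj h)) (vtx_ne_o ho hab) (vtx_ne_o ho hbc)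
    (by
      rintro z ⟨h1, h2 | h2⟩
      · exact Or.inr (arc_inter hab hac hbc h1 h2)
      · exact Or.inl (arc_inter hac.symm hbc.symm hab h2 h1))
    (ΘA := th D P a b) (ΘB := fun q => -(th D P b c q + th D P c a q))
    (fun q hq => th_cont ho fun _ => hq)
    (fun q hq => by
      rw [mem_union, not_or] at hq
      exact ((th_cont ho fun _ => hq.1).add (th_cont ho fun _ => hq.2)).neg)
    (fun q hq => th_exp ho hab hq)
    (fun q hq => by
      rw [mem_union, not_or] at hq
      rw [Complex.exp_neg, Complex.exp_add, th_exp ho hbc hq.1, th_exp ho hac.symm hq.2]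
      have := fq_vtx_ne ho hbc hq.1
      have := fq_vtx_ne ho hac.symm hq.2
      field_simp)
  rw [mem_union, not_or] at h2
  refine ⟨q, not_tri.2 ⟨h1, h2.1, h2.2⟩, fun h => h3 ?_⟩
  simp only [wd] at h
  linear_combination h

section compact
variable [CompactSpace X] [LocallyConnectedSpace X]

theorem wd_zero_iff {q : X} (hq : q ∉ D.tri a b c) :
    wd D P a b c q = 0 ↔ q ∈ connectedComponentIn (D.tri a b c)ᶜ P.o := by
  have hot := o_not_tri ho hab hac hbc
  constructor
  · intro h
    obtain ⟨h1, h2, h3⟩ := not_tri.1 hq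
    obtain ⟨L1, hL1⟩ := P.arc_log (arcFrom hab) (ho _ _ hab) h1
    obtain ⟨L2, hL2⟩ := P.arc_log (arcFrom hbc) (ho _ _ hbc) h2
    obtain ⟨L3, hL3⟩ := P.arc_log (arcFrom hac.symm) (ho _ _ hac.symm) h3
    obtain ⟨M, hM⟩ := tri_glue ho hab hac hbc (isClosed_arc ho hab) subset_rfl
      (arcFrom hab).left_mem (arcFrom hab).right_mem hL1 hL2 hL3 (by
        rw [← th_log hab hL1, ← th_log hbc hL2, ← th_log hac.symm hL3]; exact h)
    rw [← tri_eq] at hM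
    exact P.mem_comp_of_log (isClosed_tri ho hab hac hbc) hot hq hM
  · intro h
    rw [wd_comp ho hab hac hbc hot h, wd_o]

theorem wd_indep {q q' : X} (hq : q ∉ D.tri a b c) (hq' : q' ∉ D.tri a b c)
    (h : wd D P a b c q ≠ 0) (h' : wd D P a b c q' ≠ 0) :
    q' ∈ connectedComponentIn (D.tri a b c)ᶜ q := by
  by_contra hcon
  have hot := o_not_tri ho hab hac hbc
  have hcl := isClosed_tri ho hab hac hbc
  obtain ⟨m, hm⟩ := wd_int ho hab hac hbc hq
  obtain ⟨m', hm'⟩ := wd_int ho hab hac hbc hq'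
  obtain ⟨h1, h2, h3⟩ := not_tri.1 hq
  obtain ⟨h1', h2', h3'⟩ := not_tri.1 hq'
  obtain ⟨L1, hL1⟩ := P.arc_log (arcFrom hab) (ho _ _ hab) h1
  obtain ⟨L2, hL2⟩ := P.arc_log (arcFrom hbc) (ho _ _ hbc) h2
  obtain ⟨L3, hL3⟩ := P.arc_log (arcFrom hac.symm) (ho _ _ hac.symm) h3
  obtain ⟨M1, hM1⟩ := P.arc_log (arcFrom hab) (ho _ _ hab) h1'
  obtain ⟨M2, hM2⟩ := P.arc_log (arcFrom hbc) (ho _ _ hbc) h2'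
  obtain ⟨M3, hM3⟩ := P.arc_log (arcFrom hac.symm) (ho _ _ hac.symm) h3'
  have comb : ∀ {A : Set X} {L M : X → ℂ}, IsLog (P.fq q) A L → IsLog (P.fq q') A M →
      IsLog (fun z => P.fq q z ^ m' * P.fq q' z ^ (-m)) A
        (fun z => m' * L z + (-m : ℤ) * M z) := by
    intro A L M hL hM
    refine ⟨(continuousOn_const.mul hL.1).add (continuousOn_const.mul hM.1), fun z hz => ?_⟩
    rw [Complex.exp_add, Complex.exp_int_mul, Complex.exp_int_mul, hL.2 z hz, hM.2 z hz]
  have e1 : wd D P a b c q = (L1 (D.vtx b) - L1 (D.vtx a)) + (L2 (D.vtx c) - L2 (D.vtx b)) +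
      (L3 (D.vtx a) - L3 (D.vtx c)) := by
    rw [← th_log hab hL1, ← th_log hbc hL2, ← th_log hac.symm hL3]; rfl
  have e2 : wd D P a b c q' = (M1 (D.vtx b) - M1 (D.vtx a)) + (M2 (D.vtx c) - M2 (D.vtx b)) +
      (M3 (D.vtx a) - M3 (D.vtx c)) := by
    rw [← th_log hab hM1, ← th_log hbc hM2, ← th_log hac.symm hM3]; rfl
  obtain ⟨M, hM⟩ := tri_glue ho hab hac hbc (isClosed_arc ho hab) subset_rfl
      (arcFrom hab).left_mem (arcFrom hab).right_mem (comb hL1 hM1) (comb hL2 hM2) (comb hL3 hM3) (by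
        push_cast
        rw [hm] at e1
        rw [hm'] at e2
        linear_combination (-(m' : ℂ)) * e1 + (m : ℂ) * e2)
  rw [← tri_eq] at hM
  have hU : P.o ∉ connectedComponentIn (D.tri a b c)ᶜ q := by
    intro hh
    have := wd_comp ho hab hac hbc hq hh
    rw [wd_o] at this
    exact h this.symm
  have hclU := Chart.frontier_comp_subset hcl q
  have hoU : P.o ∉ closure (connectedComponentIn (D.tri a b c)ᶜ q) :=
    fun hh => (hclU hh).elim hU hot
  have hne : ∀ z ∈ closure (connectedComponentIn (D.tri a b c)ᶜ q), P.fq q' z ≠ 0 := by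
    intro z hz
    apply P.fq_ne
    · rintro rfl
      exact (hclU hz).elim hcon hq'
    · rintro rfl
      exact hoU hz
  have := P.pow_log_eq_zero hcl hot hq hU (n := m') (g := fun z => P.fq q' z ^ (-m))
    ((P.fq_cont hoU q').zpow₀ _ fun z hz => Or.inl (hne z hz))
    (fun z hz => zpow_ne_zero _ (hne z hz)) hM
  rw [this] at hm'
  exact h' (by rw [hm']; simp)

/-- The common nonzero value of the winding. -/
theorem exists_kappa : ∃ κ : ℂ, κ ≠ 0 ∧ ∀ q, q ∉ D.tri a b c →
    wd D P a b c q = 0 ∨ wd D P a b c q = κ := by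
  obtain ⟨q₀, h1, h2⟩ := exists_inside ho hab hac hbc
  refine ⟨_, h2, fun q hq => ?_⟩
  by_cases h : wd D P a b c q = 0
  · exact Or.inl h
  · exact Or.inr (wd_comp ho hab hac hbc h1 (wd_indep ho hab hac hbc h1 hq h2 h))

theorem isOpen_wd (pr : ℂ → Prop) : IsOpen {q | q ∉ D.tri a b c ∧ pr (wd D P a b c q)} ∧
    closure {q | q ∉ D.tri a b c ∧ pr (wd D P a b c q)} ⊆
      {q | q ∉ D.tri a b c ∧ pr (wd D P a b c q)} ∪ D.tri a b c := by
  have hcl := isClosed_tri ho hab hac hbc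
  have hopen : ∀ q, IsOpen (connectedComponentIn (D.tri a b c)ᶜ q) := fun q =>
    hcl.isOpen_compl.connectedComponentIn
  constructor
  · rw [isOpen_iff_mem_nhds]
    rintro q ⟨h1, h2⟩
    filter_upwards [(hopen q).mem_nhds (mem_connectedComponentIn h1)] with z hz
    refine ⟨connectedComponentIn_subset _ _ hz, ?_⟩
    rw [wd_comp ho hab hac hbc h1 hz]; exact h2
  · intro q hq
    by_cases h1 : q ∈ D.tri a b c
    · exact Or.inr h1
    · obtain ⟨z, hz, -, hz2⟩ := mem_closure_iff.1 hq _ (hopen q) (mem_connectedComponentIn h1)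
      rw [wd_comp ho hab hac hbc h1 hz] at hz2
      exact Or.inl ⟨h1, hz2⟩

/-- Both sides accumulate at every interior point of the edge `ab`. -/
theorem accum {p : X} (hp : p ∈ D.arc a b) (hpa : p ≠ D.vtx a) (hpb : p ≠ D.vtx b) {N : Set X}
    (hN : N ∈ 𝓝 p) : (∃ q ∈ N, q ∉ D.tri a b c ∧ wd D P a b c q ≠ 0) ∧
      (∃ q ∈ N, q ∉ D.tri a b c ∧ wd D P a b c q = 0) := by
  classical
  have hot := o_not_tri ho hab hac hbc
  have hpbc : p ∉ D.arc b c := fun h => hpb (arc_inter hab hac hbc hp h)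
  have hpca : p ∉ D.arc c a := fun h => hpa (arc_inter hac.symm hbc.symm hab h hp)
  obtain ⟨N₁, hN₁, hN₁o, hpN₁⟩ := mem_nhds_iff.1 hN
  let N₂ := N₁ ∩ (D.arc b c)ᶜ ∩ (D.arc c a)ᶜ
  have hN₂o : IsOpen N₂ := (hN₁o.inter (isClosed_arc ho hbc).isOpen_compl).inter
    (isClosed_arc ho hac.symm).isOpen_compl
  have hpN₂ : p ∈ N₂ := ⟨⟨hpN₁, hpbc⟩, hpca⟩
  have haN : D.vtx a ∉ N₂ := fun h => h.2 (arcFrom hac.symm).right_mem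
  have hbN : D.vtx b ∉ N₂ := fun h => h.1.2 (arcFrom hbc).left_mem
  let K := (D.arc a b \ N₂) ∪ D.arc b c ∪ D.arc c a
  have hA₀ : IsClosed (D.arc a b \ N₂) := (isClosed_arc ho hab).sdiff hN₂o
  have hK : IsClosed K := (hA₀.union (isClosed_arc ho hbc)).union (isClosed_arc ho hac.symm)
  have hKt : K ⊆ D.tri a b c := by
    rw [tri_eq]
    exact union_subset_union (union_subset_union sdiff_subset subset_rfl) subset_rfl
  have hoK : P.o ∉ K := fun h => hot (hKt h)
  have hlog : ∀ q, q ∉ D.tri a b c → q ∈ connectedComponentIn Kᶜ P.o := by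
    intro q hq
    obtain ⟨h1, h2, h3⟩ := not_tri.1 hq
    obtain ⟨L1, hL1⟩ := P.arc_log (arcFrom hab) (ho _ _ hab) h1
    obtain ⟨L2, hL2⟩ := P.arc_log (arcFrom hbc) (ho _ _ hbc) h2
    obtain ⟨L3, hL3⟩ := P.arc_log (arcFrom hac.symm) (ho _ _ hac.symm) h3
    obtain ⟨A₁, A₂, hc1, hc2, hun, hin, hxa, hyb⟩ := (arcFrom hab).split hp
    let L0 : X → ℂ := fun z => if z ∈ A₁ then L1 z else L1 z - wd D P a b c q
    have hL01 : ∀ z ∈ A₁, L0 z = L1 z := fun z hz => if_pos hz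
    have hdis : ∀ z ∈ A₂, z ≠ p → z ∉ A₁ := fun z h2 hne h1 => hne (hin ⟨h1, h2⟩)
    have hL02 : ∀ z ∈ A₂, z ≠ p → L0 z = L1 z - wd D P a b c q := fun z hz hne =>
      if_neg (hdis z hz hne)
    have hnp : ∀ z, z ∉ N₂ → z ≠ p := fun z hz h => hz (h ▸ hpN₂)
    have hL0 : IsLog (P.fq q) (D.arc a b \ N₂) L0 := by
      have hs1 : A₁ ⊆ D.arc a b := by rw [hun]; exact subset_union_left
      have hs2 : A₂ ⊆ D.arc a b := by rw [hun]; exact subset_union_right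
      constructor
      · have : D.arc a b \ N₂ = (A₁ \ N₂) ∪ (A₂ \ N₂) := by rw [hun, union_sdiff_distrib]
        rw [this]
        apply ContinuousOn.union_of_isClosed _ _ (hc1.sdiff hN₂o) (hc2.sdiff hN₂o)
        · exact (hL1.1.mono (sdiff_subset.trans hs1)).congr fun z hz => hL01 z hz.1
        · exact ((hL1.1.mono (sdiff_subset.trans hs2)).sub continuousOn_const).congr
            fun z hz => hL02 z hz.1 (hnp z hz.2)
      · rintro z ⟨hz, hzN⟩
        have he := hL1.2 z hz
        rw [hun] at hz
        rcases hz with hz | hz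
        · rw [hL01 z hz, he]
        · rw [hL02 z hz (hnp z hzN), Complex.exp_sub, he, wd_exp ho hab hac hbc hq, div_one]
    obtain ⟨M, hM⟩ := tri_glue ho hab hac hbc hA₀ sdiff_subset
      ⟨(arcFrom hab).left_mem, haN⟩ ⟨(arcFrom hab).right_mem, hbN⟩ hL0 hL2 hL3 (by
        rw [hL01 _ hxa, hL02 _ hyb hpb.symm]
        simp only [wd]
        rw [th_log hab hL1, th_log hbc hL2, th_log hac.symm hL3]
        ring)
    exact P.mem_comp_of_log hK hoK (fun h => hq (hKt h)) hM
  have key : ∀ pr : ℂ → Prop, (∃ q, q ∉ D.tri a b c ∧ pr (wd D P a b c q)) →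
      (∃ q, q ∉ D.tri a b c ∧ ¬ pr (wd D P a b c q)) →
      ∃ q ∈ N, q ∉ D.tri a b c ∧ pr (wd D P a b c q) := by
    rintro pr ⟨q, hq, hq'⟩ ⟨r, hr, hr'⟩
    by_contra! hcon
    obtain ⟨hZo, hZc⟩ := isOpen_wd ho hab hac hbc pr
    have := (isPreconnected_connectedComponentIn (F := Kᶜ) (x := P.o)).subset_of_closure_inter_subset
      hZo ⟨q, hlog q hq, hq, hq'⟩ (by
        rintro z ⟨hz1, hz2⟩
        refine (hZc hz1).resolve_right fun hzt => ?_
        have hzK : z ∉ K := connectedComponentIn_subset _ _ hz2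
        have hzN : z ∈ N₂ := by
          by_contra hzN
          rw [tri_eq] at hzt
          rcases hzt with (h | h) | h
          · exact hzK (Or.inl (Or.inl ⟨h, hzN⟩))
          · exact hzK (Or.inl (Or.inr h))
          · exact hzK (Or.inr h)
        obtain ⟨y, hy1, hy2, hy3⟩ := mem_closure_iff.1 hz1 _ hN₂o hzN
        exact hcon y (hN₁ hy1.1.1) hy2 hy3)
    exact hr' (this (hlog r hr)).2
  obtain ⟨q₀, h1, h2⟩ := exists_inside ho hab hac hbc
  have hoo : wd D P a b c P.o = 0 := wd_o a b c
  exact ⟨key (· ≠ 0) ⟨q₀, h1, h2⟩ ⟨P.o, hot, fun h => h hoo⟩,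
    key (· = 0) ⟨P.o, hot, hoo⟩ ⟨q₀, h1, h2⟩⟩

end compact
end T2
end drawing
end HullAux

namespace HullAux

theorem ArcFrom.exists_near {X : Type*} [TopologicalSpace X] {A : Set X} {x y : X}
    (h : ArcFrom A x y) {N : Set X} (hN : N ∈ 𝓝 y) : ∃ p ∈ A, p ∈ N ∧ p ≠ x ∧ p ≠ y := by
  obtain ⟨f, hc, hi, h0, h1, rfl⟩ := h
  have h1' : (1 : ℝ) ∈ Icc (0 : ℝ) 1 := by simp
  have h0' : (0 : ℝ) ∈ Icc (0 : ℝ) 1 := by simp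
  have hm : f ⁻¹' N ∈ 𝓝[Icc 0 1] (1 : ℝ) := (hc 1 h1') (by rwa [h1])
  have hm2 : f ⁻¹' N ∈ 𝓝[Ioo 0 1] (1 : ℝ) := nhdsWithin_mono _ Ioo_subset_Icc_self hm
  have : (𝓝[Ioo 0 1] (1 : ℝ)).NeBot := by
    rw [← mem_closure_iff_nhdsWithin_neBot, closure_Ioo (by norm_num)]; exact h1'
  obtain ⟨t, ht1, ht2⟩ := Filter.nonempty_of_mem (Filter.inter_mem hm2 self_mem_nhdsWithin)
  have ht : t ∈ Icc (0 : ℝ) 1 := Ioo_subset_Icc_self ht2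
  refine ⟨f t, ⟨t, ht, rfl⟩, ht1, ?_, ?_⟩
  · rw [← h0]; intro h; exact ht2.1.ne' (hi ht h0' h)
  · rw [← h1]; intro h; exact ht2.2.ne (hi ht h1' h)

section drawing
variable {n : ℕ} {X : Type*} [TopologicalSpace X] (D : GoodDrawing n X) (P : Chart X)

/-- The nonzero winding value of the oriented triangle. -/
def kap (a b c : Fin n) : ℂ := by
  classical
  exact if h : ∃ q, q ∉ D.tri a b c ∧ wd D P a b c q ≠ 0 then wd D P a b c h.choose else 0

variable {D P}
variable (ho : ∀ a b, a ≠ b → P.o ∉ D.arc a b)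
include ho
variable [T2Space X] [CompactSpace X] [LocallyConnectedSpace X]
variable {a b c d : Fin n}

section abc
variable (hab : a ≠ b) (hac : a ≠ c) (hbc : b ≠ c)
include hab hac hbc

theorem kap_ne : kap D P a b c ≠ 0 := by
  have h := exists_inside ho hab hac hbc
  have : kap D P a b c = wd D P a b c h.choose := dif_pos h
  rw [this]; exact h.choose_spec.2

theorem wd_kap {q : X} (hq : q ∉ D.tri a b c) (h0 : wd D P a b c q ≠ 0) :
    wd D P a b c q = kap D P a b c := by
  have h := exists_inside ho hab hac hbc
  have : kap D P a b c = wd D P a b c h.choose := dif_pos h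
  rw [this]
  exact wd_comp ho hab hac hbc h.choose_spec.1
    (wd_indep ho hab hac hbc h.choose_spec.1 hq h.choose_spec.2 h0)

theorem wd_or {q : X} (hq : q ∉ D.tri a b c) :
    wd D P a b c q = 0 ∨ wd D P a b c q = kap D P a b c := by
  by_cases h : wd D P a b c q = 0
  · exact Or.inl h
  · exact Or.inr (wd_kap ho hab hac hbc hq h)

theorem kap_rot : kap D P b c a = kap D P a b c := by
  obtain ⟨q, h1, h2⟩ := exists_inside ho hab hac hbc
  rw [← wd_kap ho hab hac hbc h1 h2, ← wd_rot]
  rw [← tri_rot] at h1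
  rw [← wd_rot] at h2
  exact (wd_kap ho hbc hab.symm hac.symm h1 h2).symm

theorem kap_swap : kap D P b a c = - kap D P a b c := by
  obtain ⟨q, h1, h2⟩ := exists_inside ho hab hac hbc
  rw [← wd_kap ho hab hac hbc h1 h2, ← wd_swap]
  rw [← tri_swap] at h1
  rw [← neg_ne_zero, ← wd_swap] at h2
  exact (wd_kap ho hab.symm hbc hac h1 h2).symm

theorem jump (had : a ≠ d) (hbd : b ≠ d) {p : X} (hp : p ∈ D.arc a b) (hpa : p ≠ D.vtx a)
    (hpb : p ≠ D.vtx b) : ∃ N ∈ 𝓝 p, ∀ q ∈ N, q ∉ D.arc a b →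
      q ∉ D.tri a b c ∧ q ∉ D.tri a b d ∧ ∀ q' ∈ N, q' ∉ D.arc a b →
        wd D P a b c q - wd D P a b d q = wd D P a b c q' - wd D P a b d q' := by
  have i1 : p ∉ D.arc b c := fun h => hpb (arc_inter hab hac hbc hp h)
  have i2 : p ∉ D.arc c a := fun h => hpa (arc_inter hac.symm hbc.symm hab h hp)
  have i3 : p ∉ D.arc b d := fun h => hpb (arc_inter hab had hbd hp h)
  have i4 : p ∉ D.arc d a := fun h => hpa (arc_inter had.symm hbd.symm hab h hp)
  let M : X → ℂ := fun q => th D P b c q + th D P c a q - (th D P b d q + th D P d a q)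
  have hM : ContinuousAt M p :=
    ((th_cont ho fun _ => i1).add (th_cont ho fun _ => i2)).sub
      ((th_cont ho fun _ => i3).add (th_cont ho fun _ => i4))
  have e1 := (isClosed_arc ho hbc).isOpen_compl.mem_nhds i1
  have e2 := (isClosed_arc ho hac.symm).isOpen_compl.mem_nhds i2
  have e3 := (isClosed_arc ho hbd).isOpen_compl.mem_nhds i3
  have e4 := (isClosed_arc ho had.symm).isOpen_compl.mem_nhds i4
  have e5 : M ⁻¹' Metric.ball (M p) 1 ∈ 𝓝 p := hM (Metric.ball_mem_nhds _ one_pos)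
  have hMq : ∀ q, M q = wd D P a b c q - wd D P a b d q := by
    intro q; simp only [M, wd]; ring
  refine ⟨_, Filter.inter_mem (Filter.inter_mem (Filter.inter_mem e1 e2)
    (Filter.inter_mem e3 e4)) e5, ?_⟩
  rintro q ⟨⟨⟨q1, q2⟩, q3, q4⟩, q5⟩ hq
  have t1 : q ∉ D.tri a b c := not_tri.2 ⟨hq, q1, q2⟩
  have t2 : q ∉ D.tri a b d := not_tri.2 ⟨hq, q3, q4⟩
  refine ⟨t1, t2, ?_⟩
  rintro q' ⟨⟨⟨q1', q2'⟩, q3', q4'⟩, q5'⟩ hq'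
  have t1' : q' ∉ D.tri a b c := not_tri.2 ⟨hq', q1', q2'⟩
  have t2' : q' ∉ D.tri a b d := not_tri.2 ⟨hq', q3', q4'⟩
  obtain ⟨m1, h1⟩ := wd_int ho hab hac hbc t1
  obtain ⟨m2, h2⟩ := wd_int ho hab had hbd t2
  obtain ⟨m3, h3⟩ := wd_int ho hab hac hbc t1'
  obtain ⟨m4, h4⟩ := wd_int ho hab had hbd t2'
  have hd : ‖M q - M q'‖ < 2 := by
    rw [← dist_eq_norm]
    have := dist_triangle_right (M q) (M q') (M p)
    have h5 : dist (M q) (M p) < 1 := q5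
    have h6 : dist (M q') (M p) < 1 := q5'
    linarith
  have he : M q - M q' = ((m1 - m2 - (m3 - m4) : ℤ) : ℂ) * (2 * Real.pi * Complex.I) := by
    rw [hMq, hMq, h1, h2, h3, h4]; push_cast; ring
  have hz : (m1 - m2 - (m3 - m4) : ℤ) = 0 := by
    by_contra hne
    have h1 : (1 : ℝ) ≤ |((m1 - m2 - (m3 - m4) : ℤ) : ℝ)| := by
      exact_mod_cast Int.one_le_abs hne
    rw [he, norm_mul, Complex.norm_intCast] at hd
    have h7 : ‖(2 * Real.pi * Complex.I : ℂ)‖ = 2 * Real.pi := by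
      simp [abs_of_pos Real.pi_pos]
    rw [h7] at hd
    nlinarith [Real.pi_gt_three]
  rw [hz] at he
  rw [← hMq, ← hMq]
  simpa [sub_eq_zero] using he

variable {F : Set X} (hF : D.FaceConvex F) (hoF : P.o ∈ F)
include hF hoF

theorem side_inside {Δ : Set X} (h1 : IsClosedSide (D.tri a b c) Δ) (h2 : ¬F ⊆ Δ) {q : X}
    (hq : q ∈ Δ) (hqt : q ∉ D.tri a b c) : wd D P a b c q ≠ 0 := by
  intro h0
  rw [wd_zero_iff ho hab hac hbc hqt] at h0
  obtain ⟨q0, hq0, rfl⟩ := h1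
  have hq' := hq.resolve_right hqt
  apply h2
  refine subset_trans ?_ subset_union_left
  rw [connectedComponentIn_eq hq', ← connectedComponentIn_eq h0]
  obtain ⟨r, hr, hFe⟩ := hF.1
  refine IsPreconnected.subset_connectedComponentIn ?_ hoF ?_
  · rw [hFe]; exact isPreconnected_connectedComponentIn
  · rw [hFe]
    refine (connectedComponentIn_subset _ _).trans (compl_subset_compl.2 ?_)
    intro z hz
    refine Or.inr ?_
    simp only [mem_iUnion]
    rw [tri_eq] at hz
    rcases hz with (hz | hz) | hz
    · exact ⟨a, mem_univ _, b, mem_univ _, hab, hz⟩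
    · exact ⟨b, mem_univ _, c, mem_univ _, hbc, hz⟩
    · exact ⟨c, mem_univ _, a, mem_univ _, hac.symm, hz⟩

theorem kap_inside (had : a ≠ d) (hbd : b ≠ d) (hcd : c ≠ d)
    (h : wd D P a b c (D.vtx d) ≠ 0) : kap D P a b d = kap D P a b c := by
  have hd : D.vtx d ∉ D.tri a b c := not_tri.2 ⟨D.vtx_not_mem _ _ _ hab had.symm hbd.symm,
    D.vtx_not_mem _ _ _ hbc hbd.symm hcd.symm, D.vtx_not_mem _ _ _ hac.symm hcd.symm had.symm⟩
  have hot := o_not_tri ho hab hac hbc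
  have hside : IsClosedSide (D.tri a b c)
    (connectedComponentIn (D.tri a b c)ᶜ (D.vtx d) ∪ D.tri a b c) := ⟨_, hd, rfl⟩
  have hoc : ∀ q ∈ connectedComponentIn (D.tri a b c)ᶜ (D.vtx d), wd D P a b c q ≠ 0 :=
    fun q hq => by rw [wd_comp ho hab hac hbc hd hq]; exact h
  have hconv := hF.2 a b c hab hac hbc _ hside (fun hs =>
    (hs hoF).elim (fun h => hoc _ h (wd_o a b c)) hot)
  have mt : ∀ x, x ∈ D.arc a b → x ∈ D.tri a b c := fun x hx => by
    rw [tri_eq]; exact Or.inl (Or.inl hx)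
  have hva := mt _ (arcFrom hab).left_mem
  have hvb := mt _ (arcFrom hab).right_mem
  have s1 := hconv b d hbd (Or.inr hvb) (Or.inl (mem_connectedComponentIn hd))
  have s2 := hconv d a had.symm (Or.inl (mem_connectedComponentIn hd)) (Or.inr hva)
  have hO : ∀ q ∈ connectedComponentIn (D.tri a b c)ᶜ P.o, q ∉ D.tri a b d := by
    intro q hq
    have hqt : q ∉ D.tri a b c := connectedComponentIn_subset _ _ hq
    have h0 := (wd_zero_iff ho hab hac hbc hqt).2 hq
    refine not_tri.2 ⟨fun h => hqt (mt _ h), fun h => ?_, fun h => ?_⟩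
    · exact (s1 h).elim (fun h => hoc _ h h0) hqt
    · exact (s2 h).elim (fun h => hoc _ h h0) hqt
  obtain ⟨p, hp, hpa, hpb⟩ := (arcFrom (D := D) hab).exists_interior
  obtain ⟨N, hN, hj⟩ := jump ho hab hac hbc had hbd hp hpa hpb
  obtain ⟨⟨q, hqN, hqt, hq⟩, ⟨q', hqN', hqt', hq'⟩⟩ := accum ho hab hac hbc hp hpa hpb hN
  have hz : wd D P a b d q' = 0 := by
    rw [wd_const ho hab had hbd isPreconnected_connectedComponentIn hO
      ((wd_zero_iff ho hab hac hbc hqt').1 hq') (mem_connectedComponentIn hot), wd_o]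
  obtain ⟨-, htd, hj2⟩ := hj q hqN (not_tri.1 hqt).1
  have := hj2 q' hqN' (not_tri.1 hqt').1
  rw [hz, hq', sub_zero, sub_eq_zero] at this
  rw [← wd_kap ho hab hac hbc hqt hq, this]
  rw [this] at hq
  exact (wd_kap ho hab had hbd htd hq).symm

end abc

theorem kap_sides {F : Set X} (hF : D.FaceConvex F) (hoF : P.o ∈ F) {u v w x : Fin n}
    (huv : u ≠ v) {p : X} {C : Fin 2 → Set X} (hC : D.LocalSides u v p C) {i j : Fin 2}
    (hij : i ≠ j) (hw : D.OnSide F u v p C i w) (hx : D.OnSide F u v p C j x) :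
    kap D P u v x = - kap D P u v w := by
  obtain ⟨hp, hpu, hpv, V, hV, hCV, -⟩ := hC
  obtain ⟨hwu, hwv, Δ, hΔ, hFΔ, V1, hV1, hs1⟩ := hw
  obtain ⟨hxu, hxv, Δ', hΔ', hFΔ', V2, hV2, hs2⟩ := hx
  obtain ⟨N, hN, hj⟩ := jump ho huv hwu.symm hwv.symm hxu.symm hxv.symm hp hpu hpv
  have hN' : V ∩ V1 ∩ V2 ∩ N ∈ 𝓝 p :=
    Filter.inter_mem (Filter.inter_mem (Filter.inter_mem hV hV1) hV2) hN
  have hCij : C i ∪ C j = V \ D.arc u v := by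
    rw [← hCV]
    fin_cases i <;> fin_cases j
    · exact absurd rfl hij
    · rfl
    · exact union_comm _ _
    · exact absurd rfl hij
  have hor : ∀ q ∈ V ∩ V1 ∩ V2 ∩ N, q ∉ D.arc u v →
      wd D P u v w q ≠ 0 ∨ wd D P u v x q ≠ 0 := by
    rintro q ⟨⟨⟨h1, h2⟩, h3⟩, h4⟩ h5
    obtain ⟨t1, t2, -⟩ := hj q h4 h5
    have : q ∈ C i ∪ C j := by rw [hCij]; exact ⟨h1, h5⟩
    rcases this with h | h
    · exact Or.inl (side_inside ho huv hwu.symm hwv.symm hF hoF hΔ hFΔ (hs1 ⟨h, h2⟩) t1)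
    · exact Or.inr (side_inside ho huv hxu.symm hxv.symm hF hoF hΔ' hFΔ' (hs2 ⟨h, h3⟩) t2)
  obtain ⟨-, q, hq1, hq2, hq3⟩ := accum ho huv hwu.symm hwv.symm hp hpu hpv hN'
  obtain ⟨-, r, hr1, hr2, hr3⟩ := accum ho huv hxu.symm hxv.symm hp hpu hpv hN'
  have hqa := (not_tri.1 hq2).1
  have hra := (not_tri.1 hr2).1
  have hq4 := (hor q hq1 hqa).resolve_left fun h => h hq3
  have hr4 := (hor r hr1 hra).resolve_right fun h => h hr3
  obtain ⟨-, tq, hj2⟩ := hj q hq1.2 hqa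
  obtain ⟨tr, -, -⟩ := hj r hr1.2 hra
  have := hj2 r hr1.2 hra
  rw [hq3, hr3, wd_kap ho huv hxu.symm hxv.symm tq hq4,
    wd_kap ho huv hwu.symm hwv.symm tr hr4] at this
  linear_combination -this

theorem no_cross {G : Set X} (hG : IsPreconnected G) (hoG : P.o ∈ G)
    (hab : a ≠ b) (hac : a ≠ c) (hbc : b ≠ c) (had : a ≠ d) (hbd : b ≠ d) (hcd : c ≠ d)
    (hGt : ∀ q ∈ G, q ∉ D.tri a b c) (hcl : D.arc c d ⊆ closure G) {z : X}
    (h1 : z ∈ D.arc a b) (h2 : z ∈ D.arc c d) : False := by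
  have hzv : ∀ x, x ≠ c → x ≠ d → z ≠ D.vtx x := fun x hc hd h =>
    D.vtx_not_mem c d x hcd hc hd (h ▸ h2)
  have hza := hzv a hac had
  have hzb := hzv b hbc hbd
  have i1 : z ∉ D.arc b c := fun h => hzb (arc_inter hab hac hbc h1 h)
  have i2 : z ∉ D.arc c a := fun h => hza (arc_inter hac.symm hbc.symm hab h h1)
  have e1 := (isClosed_arc ho hbc).isOpen_compl.mem_nhds i1
  have e2 := (isClosed_arc ho hac.symm).isOpen_compl.mem_nhds i2
  obtain ⟨-, -, hcr⟩ := ((D.indep_arcs a b c d hab hcd hac had hbc hbd).2 z ⟨h1, h2⟩).1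
  obtain ⟨V, hV, hVU, C1, C2, hCC, -, hp1, hp2, hn1, hn2⟩ := hcr _ (Filter.inter_mem e1 e2)
  have hVt : ∀ q ∈ V \ D.arc a b, q ∉ D.tri a b c := fun q hq =>
    not_tri.2 ⟨hq.2, (hVU hq.1).1, (hVU hq.1).2⟩
  have hout : ∀ y ∈ D.arc c d, y ∉ D.tri a b c → wd D P a b c y = 0 := by
    intro y hy hyt
    by_contra hne
    have hopen := (isOpen_wd ho hab hac hbc (· ≠ 0)).1
    obtain ⟨g, ⟨-, hg⟩, hgG⟩ := mem_closure_iff.1 (hcl hy) _ hopen ⟨hyt, hne⟩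
    apply hg
    rw [wd_const ho hab hac hbc hG hGt hgG hoG, wd_o]
  have hC : ∀ C' : Set X, C' ⊆ V \ D.arc a b → IsPreconnected C' → (D.arc c d ∩ C').Nonempty →
      ∀ q ∈ C', wd D P a b c q = 0 := by
    rintro C' hs hp ⟨y, hy1, hy2⟩ q hq
    rw [wd_const ho hab hac hbc hp (fun q hq => hVt q (hs hq)) hq hy2]
    exact hout y hy1 (hVt y (hs hy2))
  obtain ⟨⟨q, hqV, hqt, hq⟩, -⟩ := accum ho hab hac hbc h1 hza hzb hV
  have : q ∈ C1 ∪ C2 := hCC ▸ ⟨hqV, (not_tri.1 hqt).1⟩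
  rcases this with h | h
  · exact hq (hC C1 (hCC ▸ subset_union_left) hp1 hn1 q h)
  · exact hq (hC C2 (hCC ▸ subset_union_right) hp2 hn2 q h)

end drawing
end HullAux

namespace HullAux

section drawing
variable {n : ℕ} {X : Type*} [TopologicalSpace X] {D : GoodDrawing n X} {P : Chart X}
variable (ho : ∀ a b, a ≠ b → P.o ∉ D.arc a b)
include ho
variable [T2Space X] [CompactSpace X] [LocallyConnectedSpace X]
variable {F : Set X}

theorem hull_wd (hoF : P.o ∈ F) {W' : Set (Fin n)} {Δ : Set X} (hΔ : D.IsHull F W' Δ)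
    (u : Fin n) {w : Fin n} (hw : w ∉ W') (hwΔ : D.vtx w ∈ Δ) :
    ∃ x ∈ W', ∃ y ∈ W', x ≠ y ∧ wd D P u x y (D.vtx w) ≠ 0 := by
  obtain ⟨m, c, hinj, hcW, ⟨G, ⟨g, hg, rfl⟩, hFG, hfr⟩, ⟨q, hq, rfl⟩, hdis⟩ := hΔ
  have hk1 : ∀ k : Fin (m + 3), k ≠ k + 1 := fun k h => by
    have h1 : (1 : Fin (m + 3)) = 0 := left_eq_add.1 h
    have := congrArg Fin.val h1
    simp at this
  have hk2 : ∀ k : Fin (m + 3), k ≠ k + 1 + 1 := fun k h => by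
    rw [add_assoc] at h
    have h1 : (1 + 1 : Fin (m + 3)) = 0 := left_eq_add.1 h
    have := congrArg Fin.val h1
    rw [Fin.val_add] at this
    simp at this
    rw [Nat.mod_eq_of_lt (by omega)] at this
    omega
  have cne : ∀ k l, k ≠ l → c k ≠ c l := fun k l h h' => h (hinj h')
  have hwc : ∀ k, w ≠ c k := fun k h => hw (h ▸ hcW k)
  have hwA : ∀ k, D.vtx w ∉ D.arc (c k) (c (k + 1)) := fun k =>
    D.vtx_not_mem _ _ _ (cne _ _ (hk1 k)) (hwc _) (hwc _)
  have hwcyc : D.vtx w ∉ D.cycCurve c := by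
    simp only [GoodDrawing.cycCurve, mem_iUnion, not_exists]; exact hwA
  have hocyc : P.o ∉ D.cycCurve c := by
    simp only [GoodDrawing.cycCurve, mem_iUnion, not_exists]
    exact fun k => ho _ _ (cne _ _ (hk1 k))
  have hcl : IsClosed (D.cycCurve c) := by
    rw [← hfr]; exact isClosed_frontier
  have hwq := hwΔ.resolve_right hwcyc
  have hwo : D.vtx w ∉ connectedComponentIn (D.cycCurve c)ᶜ P.o := by
    intro h
    have h2 : P.o ∈ connectedComponentIn (D.cycCurve c)ᶜ q := by
      rw [connectedComponentIn_eq hwq, ← connectedComponentIn_eq h]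
      exact mem_connectedComponentIn hocyc
    exact disjoint_left.1 hdis hoF (Or.inl h2)
  have hsum : ∑ k, th D P (c k) (c (k + 1)) (D.vtx w) ≠ 0 := by
    intro h0
    apply hwo
    have hL : ∀ k, ∃ L, IsLog (P.fq (D.vtx w)) (D.arc (c k) (c (k + 1))) L := fun k =>
      P.arc_log (arcFrom (cne _ _ (hk1 k))) (ho _ _ (cne _ _ (hk1 k))) (hwA k)
    choose L hL using hL
    obtain ⟨M, hM⟩ := exists_log_cycle (N := m + 3) (A := fun k => D.arc (c k) (c (k + 1)))
      (x := fun k => D.vtx (c k)) (f := P.fq (D.vtx w)) (L := L)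
      (fun k => isClosed_arc ho (cne _ _ (hk1 k)))
      (fun k => (arcFrom (cne _ _ (hk1 k))).left_mem)
      (fun k => (arcFrom (cne _ _ (hk1 k))).right_mem)
      (by
        intro k l hkl z hzk hzl
        by_cases h1 : l = k + 1
        · left
          refine ⟨h1, ?_⟩
          subst h1
          exact arc_inter (cne _ _ (hk1 k)) (cne _ _ (hk2 k)) (cne _ _ (hk1 (k + 1))) hzk hzl
        by_cases h2 : k = l + 1
        · right
          refine ⟨h2, ?_⟩
          subst h2
          exact arc_inter (cne _ _ (hk1 l)) (cne _ _ (hk2 l)) (cne _ _ (hk1 (l + 1))) hzl hzk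
        exfalso
        refine no_cross ho (a := c k) (b := c (k + 1)) (c := c l) (d := c (l + 1))
          (isPreconnected_connectedComponentIn (F := (D.image W')ᶜ) (x := g)) (hFG hoF)
          (cne _ _ (hk1 k)) (cne _ _ hkl) (cne _ _ (Ne.symm h1)) (cne _ _ h2)
          (cne _ _ fun h => hkl (add_right_cancel h)) (cne _ _ (hk1 l)) ?_ ?_ hzk hzl
        · intro y hy hyt
          apply connectedComponentIn_subset _ _ hy
          refine Or.inr ?_
          simp only [mem_iUnion]
          rw [tri_eq] at hyt
          rcases hyt with (h | h) | h
          · exact ⟨_, hcW k, _, hcW (k + 1), cne _ _ (hk1 k), h⟩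
          · exact ⟨_, hcW (k + 1), _, hcW l, cne _ _ (Ne.symm h1), h⟩
          · exact ⟨_, hcW l, _, hcW k, cne _ _ (Ne.symm hkl), h⟩
        · intro y hy
          apply frontier_subset_closure
          rw [hfr]
          exact mem_iUnion.2 ⟨l, hy⟩)
      hL
      (by
        rw [← h0]
        exact Finset.sum_congr rfl fun k _ => (th_log (cne _ _ (hk1 k)) (hL k)).symm)
    exact P.mem_comp_of_log hcl hocyc hwcyc hM
  have htel : ∑ k, wd D P u (c k) (c (k + 1)) (D.vtx w) =
      ∑ k, th D P (c k) (c (k + 1)) (D.vtx w) := by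
    simp only [wd, Finset.sum_add_distrib]
    have h1 : ∑ k, th D P (c (k + 1)) u (D.vtx w) = ∑ k, th D P (c k) u (D.vtx w) :=
      Equiv.sum_comp (Equiv.addRight (1 : Fin (m + 3))) (fun k => th D P (c k) u (D.vtx w))
    have h2 : ∑ k, th D P (c k) u (D.vtx w) = - ∑ k, th D P u (c k) (D.vtx w) := by
      rw [← Finset.sum_neg_distrib]
      exact Finset.sum_congr rfl fun k _ => th_symm D P _ _ _
    rw [h1, h2]; ring
  rw [← htel] at hsum
  obtain ⟨k, -, hk⟩ := Finset.exists_ne_zero_of_sum_ne_zero hsum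
  exact ⟨_, hcW k, _, hcW (k + 1), cne _ _ (hk1 k), hk⟩

variable (hF : D.FaceConvex F) (hoF : P.o ∈ F)
include hF hoF

theorem asym {u v x y w : Fin n} (huv : u ≠ v) (hux : u ≠ x) (huy : u ≠ y) (huw : u ≠ w)
    (hvx : v ≠ x) (hvy : v ≠ y) (hvw : v ≠ w) (hxy : x ≠ y) (hxw : x ≠ w) (hyw : y ≠ w)
    (hyuv : kap D P u v y = - kap D P u v w)
    (h1 : wd D P u x y (D.vtx w) ≠ 0) (h2 : wd D P v x y (D.vtx w) ≠ 0)
    (h3 : wd D P u x y (D.vtx v) = 0) :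
    kap D P u x y = kap D P u v w ∨ kap D P u x y = 2 * kap D P u v w := by
  have h1' : wd D P x y u (D.vtx w) ≠ 0 := by rwa [wd_rot]
  have h1'' : wd D P y u x (D.vtx w) ≠ 0 := by rwa [wd_rot, wd_rot]
  have h2' : wd D P x y v (D.vtx w) ≠ 0 := by rwa [wd_rot]
  have h2'' : wd D P y v x (D.vtx w) ≠ 0 := by rwa [wd_rot, wd_rot]
  have k1 := kap_inside ho hux huy hxy hF hoF huw hxw hyw h1
  have k2 := kap_inside ho hxy hux.symm huy.symm hF hoF hxw hyw huw h1'
  have k3 := kap_inside ho huy.symm hxy.symm hux hF hoF hyw huw hxw h1''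
  have k5 := kap_inside ho hxy hvx.symm hvy.symm hF hoF hxw hyw hvw h2'
  have k6 := kap_inside ho hvy.symm hxy.symm hvx hF hoF hyw hvw hxw h2''
  have r1 := kap_rot ho hux huy hxy
  have r2 := kap_rot ho hxy hux.symm huy.symm
  have r5 := kap_rot ho hxy hvx.symm hvy.symm
  have s1 := kap_swap ho hvy.symm hyw hvw
  -- all relevant values are `δ`
  have dne := kap_ne ho hux huy hxy
  have ene := kap_ne ho huv huw hvw
  have y2 : kap D P x y w = kap D P u x y := by rw [k2, r1]
  have y3 : kap D P y u w = kap D P u x y := by rw [k3, r2, r1]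
  have y6 : kap D P v y w = - kap D P u x y := by rw [s1, k6, r5, ← k5, y2]
  have hvt : D.vtx v ∉ D.tri y u w := not_tri.2 ⟨D.vtx_not_mem _ _ _ huy.symm hvy huv.symm,
    D.vtx_not_mem _ _ _ huw huv.symm hvw, D.vtx_not_mem _ _ _ hyw.symm hvw hvy⟩
  have hopen : IsOpen (connectedComponentIn (D.tri y u w)ᶜ (D.vtx v)) :=
    (isClosed_tri ho huy.symm hyw huw).isOpen_compl.connectedComponentIn
  obtain ⟨p, hp, hpN, hpu, hpv⟩ := (arcFrom (D := D) huv).exists_near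
    (hopen.mem_nhds (mem_connectedComponentIn hvt))
  have hpvy : p ∉ D.arc v y := fun h => hpv (arc_inter huv huy hvy hp h)
  obtain ⟨⟨q, ⟨hqN, hqvy⟩, hqt, hq⟩, -⟩ := accum ho huv huw hvw hp hpu hpv
    (Filter.inter_mem (hopen.mem_nhds hpN) ((isClosed_arc ho hvy).isOpen_compl.mem_nhds hpvy))
  obtain ⟨q1, q2, q3⟩ := not_tri.1 hqt
  have hqt2 : q ∉ D.tri y u w := connectedComponentIn_subset _ _ hqN
  obtain ⟨q4, q5, q6⟩ := not_tri.1 hqt2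
  have hyv : wd D P y u w q = wd D P y u w (D.vtx v) := wd_comp ho huy.symm hyw huw hvt hqN
  have hs : wd D P y u w q = 0 := by
    by_contra hne
    have e1 := wd_kap ho huy.symm hyw huw hqt2 hne
    have hadd := wd_add D P u x y w (D.vtx v)
    rw [h3, ← hyv, e1, y3] at hadd
    have t1 : D.vtx v ∉ D.tri u x w := not_tri.2 ⟨D.vtx_not_mem _ _ _ hux huv.symm hvx,
      D.vtx_not_mem _ _ _ hxw hvx hvw, D.vtx_not_mem _ _ _ huw.symm hvw huv.symm⟩
    have t2 : D.vtx v ∉ D.tri x y w := not_tri.2 ⟨D.vtx_not_mem _ _ _ hxy hvx hvy,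
      D.vtx_not_mem _ _ _ hyw hvy hvw, D.vtx_not_mem _ _ _ hxw.symm hvw hvx⟩
    have o1 := wd_or ho hux huw hxw t1
    have o2 := wd_or ho hxy hxw hyw t2
    rw [k1] at o1
    rw [y2] at o2
    apply dne
    rcases o1 with o1 | o1 <;> rcases o2 with o2 | o2 <;> rw [o1, o2] at hadd
    · linear_combination -hadd
    · linear_combination -hadd / 2
    · linear_combination -hadd / 2
    · linear_combination -hadd / 3
  have hadd := wd_add D P u v y w q
  have t1 : q ∉ D.tri u v y := not_tri.2 ⟨q1, hqvy, q4⟩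
  have t2 : q ∉ D.tri v y w := not_tri.2 ⟨hqvy, by rwa [D.arc_symm], by rwa [D.arc_symm]⟩
  have o1 := wd_or ho huv huy hvy t1
  have o2 := wd_or ho hvy hvw hyw t2
  rw [hyuv] at o1
  rw [y6] at o2
  rw [hs, wd_kap ho huv huw hvw hqt hq] at hadd
  rcases o1 with o1 | o1 <;> rcases o2 with o2 | o2 <;> rw [o1, o2] at hadd
  · exact absurd (by linear_combination -hadd) ene
  · left; linear_combination hadd
  · exact absurd (by linear_combination -hadd / 2) ene
  · right; linear_combination hadd

theorem main {u v : Fin n} (huv : u ≠ v) {W : Set (Fin n)} {i j : Fin 2} (hij : i ≠ j)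
    {p : X} {C : Fin 2 → Set X} (hC : D.LocalSides u v p C)
    {Δ : Set X} (hΔ : D.IsHull F ((W ∪ {u, v}) ∩ D.SideSet F u v p C j) Δ) {w : Fin n}
    (hw : w ∈ D.SideSet F u v p C i) (hwu : w ≠ u) (hwv : w ≠ v) : D.vtx w ∉ Δ := by
  intro hwΔ
  have hwi : D.OnSide F u v p C i w := by
    rcases hw with (h | h) | h
    · exact absurd h hwu
    · exact absurd h hwv
    · exact h
  have hside : ∀ x ∈ (W ∪ {u, v}) ∩ D.SideSet F u v p C j, x ≠ u → x ≠ v →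
      kap D P u v x = - kap D P u v w := by
    rintro x ⟨-, (h | h) | h⟩ hxu hxv
    · exact absurd h hxu
    · exact absurd h hxv
    · exact kap_sides ho hF hoF huv hC hij hwi h
  have huw := hwu.symm
  have hvw := hwv.symm
  have ene := kap_ne ho huv huw hvw
  have hne : kap D P u v w ≠ - kap D P u v w := fun h => ene (by linear_combination h / 2)
  have hwW : w ∉ (W ∪ {u, v}) ∩ D.SideSet F u v p C j := fun h =>
    hne (hside w h hwu hwv)
  obtain ⟨x, hx, y, hy, hxy, hwd⟩ := hull_wd ho hoF hΔ u hwW hwΔ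
  have hxw : x ≠ w := fun h => hwW (h ▸ hx)
  have hyw : y ≠ w := fun h => hwW (h ▸ hy)
  have hux : u ≠ x := by
    rintro rfl
    apply hwd
    simp only [wd, th_self, th_symm D P u y]; ring
  have huy : u ≠ y := by
    rintro rfl
    apply hwd
    simp only [wd, th_self, th_symm D P u x]; ring
  -- no triangle on `u v` and a vertex of the other side contains `w`
  have hout : ∀ z ∈ (W ∪ {u, v}) ∩ D.SideSet F u v p C j, z ≠ u → z ≠ v →
      wd D P u v z (D.vtx w) = 0 := by
    intro z hz hzu hzv
    by_contra h
    have hzw : z ≠ w := fun h => hwW (h ▸ hz)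
    have := kap_inside ho huv hzu.symm hzv.symm hF hoF huw hvw hzw h
    rw [hside z hz hzu hzv] at this
    exact hne this
  have hsw : ∀ a b c q, wd D P a b c q = - wd D P a c b q := fun a b c q => by
    rw [← wd_rot D P a c b, wd_swap D P b c a, wd_rot D P a b c, neg_neg]
  have hvx : v ≠ x := by
    rintro rfl
    exact hwd (hout y hy huy.symm hxy.symm)
  have hvy : v ≠ y := by
    rintro rfl
    apply hwd
    rw [hsw, hout x hx hux.symm hvx.symm, neg_zero]
  have ex := hside x hx hux.symm hvx.symm
  have ey := hside y hy huy.symm hvy.symm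
  have h3 : wd D P u x y (D.vtx v) = 0 := by
    by_contra h
    have h' : wd D P y u x (D.vtx v) ≠ 0 := by rwa [wd_rot, wd_rot]
    have k1 := kap_inside ho hux huy hxy hF hoF huv hvx.symm hvy.symm h
    have k2 := kap_inside ho huy.symm hxy.symm hux hF hoF hvy.symm huv hvx.symm h'
    have r1 := kap_rot ho huy.symm hxy.symm hux
    have r2 := kap_rot ho huv huy hvy
    have r3 := kap_rot ho hvy huv.symm huy.symm
    have r4 := kap_rot ho huv hux hvx
    have r5 := kap_rot ho hvx huv.symm hux.symm
    have s1 := kap_swap ho hux.symm hvx.symm huv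
    apply ene
    rw [k2, ← r1] at r3
    rw [k1, r5, r4, ex] at s1
    rw [r2, ey] at r3
    linear_combination (-1/2) * s1 + (1/2) * r3
  have h2 : wd D P v x y (D.vtx w) ≠ 0 := by
    have hadd := wd_add D P u x y v (D.vtx w)
    have e1 : wd D P u x v (D.vtx w) = 0 := by
      rw [hsw, hout x hx hux.symm hvx.symm, neg_zero]
    have e2 : wd D P y u v (D.vtx w) = 0 := by
      rw [← wd_rot, hout y hy huy.symm hvy.symm]
    rw [e1, e2, wd_rot D P v x y] at hadd
    intro h
    apply hwd
    rw [hadd, h]; ring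
  have c1 := asym ho hF hoF huv hux huy huw hvx hvy hvw hxy hxw hyw ey hwd h2 h3
  have c2 := asym ho hF hoF huv huy hux huw hvy hvx hvw hxy.symm hyw hxw ex
    (by rw [hsw, neg_ne_zero]; exact hwd) (by rw [hsw, neg_ne_zero]; exact h2)
    (by rw [hsw, h3, neg_zero])
  have s : kap D P u y x = - kap D P u x y := by
    rw [← kap_rot ho hux huy hxy, ← kap_swap ho hxy hux.symm huy.symm,
      kap_rot ho huy hux hxy.symm]
  rw [s] at c2
  apply ene
  rcases c1 with c1 | c1 <;> rcases c2 with c2 | c2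
  · linear_combination (-1/2) * c1 + (-1/2) * c2
  · linear_combination (-1/3) * c1 + (-1/3) * c2
  · linear_combination (-1/3) * c1 + (-1/3) * c2
  · linear_combination (-1/4) * c1 + (-1/4) * c2

end drawing

instance fact3 : Fact (Module.finrank ℝ (EuclideanSpace ℝ (Fin 3)) = 2 + 1) := ⟨by simp⟩

/-- Stereographic chart of the sphere with pole `o`. -/
def sphereChart (o : SpherePt) : Chart SpherePt where
  e := (stereographic' 2 o).trans
    Complex.orthonormalBasisOneI.repr.symm.toHomeomorph.toOpenPartialHomeomorph
  o := o
  hs := by simp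
  ht := by simp

end HullAux

/-- No vertex of `Side(uv,i) \ {u,v}` has its point in the convex hull of
`(W ∪ {u,v}) ∩ Side(uv,j)`, where `{i,j} = {1,2}`. -/
theorem oppSide_not_in_hull (n : ℕ) (D : GoodDrawing n SpherePt)
    (F : Set SpherePt) (hFC : D.FaceConvex F) (u v : Fin n) (huv : u ≠ v)
    (W : Set (Fin n)) (i j : Fin 2) (hij : i ≠ j)
    (p : SpherePt) (C : Fin 2 → Set SpherePt) (hC : D.LocalSides u v p C)
    (hcard : 3 ≤ ((W ∪ {u, v}) ∩ D.SideSet F u v p C j).ncard)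
    (Δ : Set SpherePt) (hΔ : D.IsHull F ((W ∪ {u, v}) ∩ D.SideSet F u v p C j) Δ) :
    ∀ w ∈ D.SideSet F u v p C i, w ≠ u → w ≠ v → D.vtx w ∉ Δ := by
  intro w hw hwu hwv
  have : LocallyConnectedSpace SpherePt :=
    ChartedSpace.locallyConnectedSpace (EuclideanSpace ℝ (Fin 2)) _
  obtain ⟨q, hq, hFq⟩ := hFC.1
  have ho : ∀ a b, a ≠ b → (HullAux.sphereChart q).o ∉ D.arc a b := by
    intro a b hab h
    apply hq
    refine Or.inr ?_
    simp only [mem_iUnion]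
    exact ⟨a, mem_univ _, b, mem_univ _, hab, h⟩
  have hoF : (HullAux.sphereChart q).o ∈ F := by
    rw [hFq]; exact mem_connectedComponentIn hq
  exact HullAux.main ho hFC hoF huv hij hC hΔ hw hwu hwv

end
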